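/- arXiv:2002.02853 — 6 statements merged into one kernel-verified Lean document; each statement's English description precedes it below -/
import Mathlib

section
/- Higher regularity of H_φ (Remark 3.2, positive part): For every δ with 0 ≤ δ < 1 there exists a constant C_δ > 0 such that for every family of complex numbers (φ̂_{m,n})_{m∈ℤ, n≥1} with ∑_{m∈ℤ, n≥1} |φ̂_{m,n}|² (m²+n²)^{2+δ} < ∞, one has ∑_{l,l' ∈ Λ} (1+|l|²+|l'|²)^δ |ℱ_lℱ_{l'}(H_φ)|² ≤ C_δ · ∑_{m∈ℤ, n≥1} |φ̂_{m,n}|² (m²+n²)^{2+δ}. In other words, φ ∈ ℍ^{2+δ} implies H_φ ∈ ℍ^δ(D×D) for every δ < 1. -/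
noncomputable section

/-- The index set `Λ = ℤ × (ℕ∖{0})`, realized as pairs of integers with positive second entry. -/
def Lam : Set (ℤ × ℤ) := {l | 1 ≤ l.2}

/-- The double Fourier coefficient `ℱ_l ℱ_{l'} (H_φ)` of the kernel `H_φ` representing the
quasi-geostrophic nonlinearity, in terms of the (odd-in-`k` extended) Fourier coefficients
`c = φ̂` of the test function `φ`. -/
def Hcoeff (c : ℤ × ℤ → ℂ) (l l' : ℤ × ℤ) : ℂ :=
  (1 / (4 * Complex.I)) *
    (((l'.1 * l.2 - l.1 * l'.2 : ℤ) : ℂ) * c (l.1 + l'.1, l.2 + l'.2)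
      - ((l'.1 * l.2 + l.1 * l'.2 : ℤ) : ℂ) * c (l.1 + l'.1, l.2 - l'.2)) *
    (1 / ((l.1 : ℂ)^2 + (l.2 : ℂ)^2) - 1 / ((l'.1 : ℂ)^2 + (l'.2 : ℂ)^2))

/-! Reflecting `l'` across the first axis turns the second summand of `ℱ_lℱ_{l'}(H_φ)` into the
first, so it suffices to bound the terms `(l × l') c (l + l') (|l|⁻² - |l'|⁻²)` over all of
`ℤ² × ℤ²`. Writing `m = l + l'`, Cauchy–Schwarz gives both `(l × l')² ≤ |m|² min(|l|², |l'|²)` and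
`(|l|² - |l'|²)² ≤ 2 |m|² (|l|² + |l'|²)`, whence the squared term is at most
`4 |c m|² |m|⁴ / (|l|² |l'|²)`. For `0 ≤ δ ≤ 1` the weight `(1 + |l|² + |l'|²) ^ δ` turns
`1 / (|l|² |l'|²)` into at most `3 (|l| ^ (2δ - 4) + |l'| ^ (2δ - 4))`, and after the change of
variables `(l, l') ↦ (l, m)` the double sum factors; `∑ |l| ^ (2δ - 4)` over the planar lattice
converges exactly when `δ < 1`. -/

/-- The squared Euclidean length `|l|²` of a lattice point. -/
def latticeNormSq (l : ℤ × ℤ) : ℝ := (l.1 : ℝ) ^ 2 + (l.2 : ℝ) ^ 2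

/-- The cross product of two lattice points, with the sign convention of `Hcoeff`. -/
def latticeCross (x y : ℤ × ℤ) : ℤ := y.1 * x.2 - x.1 * y.2

/-- The reflection `(j, k) ↦ (j, -k)` of the lattice, under which Fourier coefficients of
functions vanishing on the boundary are odd. -/
def latticeReflect : ℤ × ℤ ≃ ℤ × ℤ := Equiv.prodCongr (Equiv.refl ℤ) (Equiv.neg ℤ)

/-- The coefficient at `(x, y)` of the quasi-geostrophic kernel on the full torus, where the
symmetry in the second variable is not imposed. The junk value `1 / 0 = 0` at `x = 0` or `y = 0`
is harmless since the cross product vanishes there. -/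
def torusCoeff (c : ℤ × ℤ → ℂ) (x y : ℤ × ℤ) : ℂ :=
  latticeCross x y * c (x + y) * ((1 / latticeNormSq x - 1 / latticeNormSq y : ℝ) : ℂ)

/-- The summand of the squared homogeneous `ℍ^s` norm of the function with Fourier
coefficients `c`. -/
def sobolevTerm (s : ℝ) (c : ℤ × ℤ → ℂ) (m : ℤ × ℤ) : ℝ := ‖c m‖ ^ 2 * latticeNormSq m ^ s

/-- The summand of the squared `ℍ^δ` norm of the function of two variables with double Fourier
coefficients `a`. -/
def doubleSobolevTerm (δ : ℝ) (a : ℤ × ℤ → ℤ × ℤ → ℂ) (p : (ℤ × ℤ) × (ℤ × ℤ)) : ℝ :=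
  (1 + latticeNormSq p.1 + latticeNormSq p.2) ^ δ * ‖a p.1 p.2‖ ^ 2

section Lattice

lemma latticeNormSq_nonneg (l : ℤ × ℤ) : 0 ≤ latticeNormSq l := by
  unfold latticeNormSq; positivity

@[simp]
lemma latticeNormSq_zero : latticeNormSq 0 = 0 := by simp [latticeNormSq]

lemma one_le_latticeNormSq {l : ℤ × ℤ} (hl : l ≠ 0) : 1 ≤ latticeNormSq l := by
  have hpos : 0 < l.1 ^ 2 + l.2 ^ 2 := by
    contrapose! hl
    ext <;> simp only [Prod.fst_zero, Prod.snd_zero] <;> nlinarith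
  unfold latticeNormSq
  exact_mod_cast Int.add_one_le_of_lt hpos

@[simp]
lemma latticeNormSq_reflect (l : ℤ × ℤ) : latticeNormSq (latticeReflect l) = latticeNormSq l := by
  simp [latticeNormSq, latticeReflect]

lemma norm_sq_le_latticeNormSq (l : ℤ × ℤ) : ‖l‖ ^ 2 ≤ latticeNormSq l := by
  rw [Prod.norm_def, Int.norm_eq_abs, Int.norm_eq_abs, latticeNormSq]
  rcases max_choice |(l.1 : ℝ)| |(l.2 : ℝ)| with h | h <;> rw [h, sq_abs]
  · exact le_add_of_nonneg_right (sq_nonneg _)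
  · exact le_add_of_nonneg_left (sq_nonneg _)

lemma norm_finTwoArrowEquiv_symm {E : Type*} [SeminormedAddGroup E] (x : E × E) :
    ‖(finTwoArrowEquiv E).symm x‖ = ‖x‖ := by
  refine eq_of_forall_ge_iff fun r => ?_
  rcases lt_or_ge r 0 with hr | hr
  · exact iff_of_false (hr.trans_le (norm_nonneg _)).not_ge (hr.trans_le (norm_nonneg _)).not_ge
  · simp [pi_norm_le_iff_of_nonneg hr, Prod.norm_def, Fin.forall_fin_two]

lemma summable_latticeNormSq_rpow {s : ℝ} (hs : s < -1) :
    Summable fun l => latticeNormSq l ^ s := by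
  have hnorm : Summable fun l : ℤ × ℤ => ‖l‖ ^ (-(-2 * s)) := by
    have h := EisensteinSeries.summable_one_div_norm_rpow (k := -2 * s) (by linarith)
    simpa only [Function.comp_def, norm_finTwoArrowEquiv_symm] using
      (finTwoArrowEquiv ℤ).symm.summable_iff.mpr h
  refine hnorm.of_nonneg_of_le (fun l => Real.rpow_nonneg (latticeNormSq_nonneg l) s) fun l => ?_
  rcases eq_or_ne l 0 with rfl | hl
  · simp only [latticeNormSq_zero, Real.zero_rpow (show s ≠ 0 by linarith)]
    positivity
  · have hpos : 0 < ‖l‖ := norm_pos_iff.mpr hl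
    calc latticeNormSq l ^ s
        ≤ (‖l‖ ^ 2) ^ s :=
          Real.rpow_le_rpow_of_nonpos (by positivity) (norm_sq_le_latticeNormSq l) (by linarith)
      _ = ‖l‖ ^ (-(-2 * s)) := by
          rw [← Real.rpow_natCast, ← Real.rpow_mul hpos.le]
          congr 1
          push_cast
          ring

lemma tsum_latticeNormSq_rpow_pos {s : ℝ} (hs : s < -1) : 0 < ∑' l, latticeNormSq l ^ s :=
  (summable_latticeNormSq_rpow hs).tsum_pos
    (fun l => Real.rpow_nonneg (latticeNormSq_nonneg l) s) (1, 0) (by simp [latticeNormSq])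

end Lattice

section CrossProduct

lemma sq_mul_add_mul_le (a b c d : ℝ) :
    (a * c + b * d) ^ 2 ≤ (a ^ 2 + b ^ 2) * (c ^ 2 + d ^ 2) := by
  linarith [sq_nonneg (a * d - b * c)]

lemma sq_latticeCross_le (l l' : ℤ × ℤ) :
    (latticeCross l l' : ℝ) ^ 2 ≤ latticeNormSq l * latticeNormSq l' := by
  have h := sq_mul_add_mul_le l.2 (-l.1) l'.1 l'.2
  simp only [latticeCross, latticeNormSq]
  push_cast
  linarith

lemma latticeCross_add_left (l l' : ℤ × ℤ) : latticeCross (l + l') l' = latticeCross l l' := by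
  simp only [latticeCross, Prod.fst_add, Prod.snd_add]
  ring

lemma latticeCross_add_right (l l' : ℤ × ℤ) : latticeCross l (l + l') = latticeCross l l' := by
  simp only [latticeCross, Prod.fst_add, Prod.snd_add]
  ring

lemma sq_latticeNormSq_sub_le (l l' : ℤ × ℤ) :
    (latticeNormSq l - latticeNormSq l') ^ 2 ≤
      2 * latticeNormSq (l + l') * (latticeNormSq l + latticeNormSq l') := by
  have inner_add_sub : latticeNormSq l - latticeNormSq l' =
      ((l + l').1 : ℝ) * (l - l').1 + ((l + l').2 : ℝ) * (l - l').2 := by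
    simp only [latticeNormSq, Prod.fst_add, Prod.snd_add, Prod.fst_sub, Prod.snd_sub]
    push_cast
    ring
  have parallelogram : latticeNormSq (l + l') + latticeNormSq (l - l') =
      2 * (latticeNormSq l + latticeNormSq l') := by
    simp only [latticeNormSq, Prod.fst_add, Prod.snd_add, Prod.fst_sub, Prod.snd_sub]
    push_cast
    ring
  calc (latticeNormSq l - latticeNormSq l') ^ 2
      ≤ latticeNormSq (l + l') * latticeNormSq (l - l') := by
        rw [inner_add_sub]
        exact sq_mul_add_mul_le _ _ _ _
    _ ≤ latticeNormSq (l + l') * (2 * (latticeNormSq l + latticeNormSq l')) := by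
        gcongr
        · exact latticeNormSq_nonneg _
        · linarith [latticeNormSq_nonneg (l + l')]
    _ = 2 * latticeNormSq (l + l') * (latticeNormSq l + latticeNormSq l') := by ring

lemma mul_sq_one_div_sub_one_div_le {A B S X : ℝ} (hA : 0 < A) (hB : 0 < B) (hS : 0 ≤ S)
    (hX : 0 ≤ X) (hXA : X ≤ S * A) (hXB : X ≤ S * B) (hAB : (A - B) ^ 2 ≤ 2 * S * (A + B)) :
    X * (1 / A - 1 / B) ^ 2 ≤ 4 * S ^ 2 * (1 / (A * B)) := by
  have numerator_le : X * (A - B) ^ 2 ≤ 4 * S ^ 2 * (A * B) :=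
    calc X * (A - B) ^ 2 ≤ X * (2 * S * (A + B)) := by gcongr
      _ = 2 * S * (X * B + X * A) := by ring
      _ ≤ 2 * S * (S * A * B + S * B * A) := by gcongr
      _ = 4 * S ^ 2 * (A * B) := by ring
  calc X * (1 / A - 1 / B) ^ 2 = X * (A - B) ^ 2 / (A * B) ^ 2 := by field_simp; ring
    _ ≤ 4 * S ^ 2 * (A * B) / (A * B) ^ 2 := by gcongr
    _ = 4 * S ^ 2 * (1 / (A * B)) := by field_simp

lemma norm_sq_torusCoeff_le (c : ℤ × ℤ → ℂ) {l l' : ℤ × ℤ} (hl : l ≠ 0) (hl' : l' ≠ 0) :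
    ‖torusCoeff c l l'‖ ^ 2 ≤ 4 * (‖c (l + l')‖ ^ 2 * latticeNormSq (l + l') ^ 2) *
      (1 / (latticeNormSq l * latticeNormSq l')) := by
  have hcross_left : (latticeCross l l' : ℝ) ^ 2 ≤ latticeNormSq (l + l') * latticeNormSq l := by
    rw [← latticeCross_add_right, mul_comm]
    exact sq_latticeCross_le _ _
  have hcross_right : (latticeCross l l' : ℝ) ^ 2 ≤ latticeNormSq (l + l') * latticeNormSq l' := by
    rw [← latticeCross_add_left]
    exact sq_latticeCross_le _ _
  have hmultiplier := mul_sq_one_div_sub_one_div_le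
    (zero_lt_one.trans_le (one_le_latticeNormSq hl))
    (zero_lt_one.trans_le (one_le_latticeNormSq hl')) (latticeNormSq_nonneg _) (sq_nonneg _)
    hcross_left hcross_right (sq_latticeNormSq_sub_le l l')
  calc ‖torusCoeff c l l'‖ ^ 2
      = ‖c (l + l')‖ ^ 2 * ((latticeCross l l' : ℝ) ^ 2 *
          (1 / latticeNormSq l - 1 / latticeNormSq l') ^ 2) := by
        rw [torusCoeff, norm_mul, norm_mul, Complex.norm_intCast, Complex.norm_real,
          Real.norm_eq_abs, mul_pow, mul_pow, sq_abs, sq_abs]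
        ring
    _ ≤ ‖c (l + l')‖ ^ 2 * (4 * latticeNormSq (l + l') ^ 2 *
          (1 / (latticeNormSq l * latticeNormSq l'))) := by gcongr
    _ = _ := by ring

end CrossProduct

section TorusEstimate

lemma one_add_add_rpow_mul_le_of_le {δ A B : ℝ} (hδ0 : 0 ≤ δ) (hδ1 : δ ≤ 1) (hA : 1 ≤ A)
    (hAB : A ≤ B) : (1 + A + B) ^ δ * (1 / (A * B)) ≤ 3 * A ^ (δ - 2) := by
  have hA0 : 0 < A := by linarith
  have hB0 : 0 < B := by linarith
  have three_rpow_le : (3 : ℝ) ^ δ ≤ 3 := by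
    simpa using Real.rpow_le_rpow_of_exponent_le (x := 3) (by norm_num) hδ1
  have rpow_sub_one_anti : B ^ (δ - 1) ≤ A ^ (δ - 1) :=
    Real.rpow_le_rpow_of_nonpos hA0 hAB (by linarith)
  calc (1 + A + B) ^ δ * (1 / (A * B)) ≤ (3 * B) ^ δ * (1 / (A * B)) := by
        gcongr
        linarith
    _ = 3 ^ δ * (B ^ (δ - 1) * A⁻¹) := by
        rw [Real.mul_rpow (by norm_num) hB0.le, Real.rpow_sub_one hB0.ne']
        field_simp
    _ ≤ 3 * (A ^ (δ - 1) * A⁻¹) := by gcongr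
    _ = 3 * A ^ (δ - 2) := by
        rw [← div_eq_mul_inv, ← Real.rpow_sub_one hA0.ne']
        ring_nf

lemma one_add_add_rpow_mul_le {δ A B : ℝ} (hδ0 : 0 ≤ δ) (hδ1 : δ ≤ 1) (hA : 1 ≤ A) (hB : 1 ≤ B) :
    (1 + A + B) ^ δ * (1 / (A * B)) ≤ 3 * (A ^ (δ - 2) + B ^ (δ - 2)) := by
  wlog hAB : A ≤ B generalizing A B
  · rw [add_right_comm, mul_comm A B, add_comm (A ^ _)]
    exact this hB hA (le_of_not_ge hAB)
  · have hB0 : 0 ≤ B ^ (δ - 2) := by positivity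
    linarith [one_add_add_rpow_mul_le_of_le hδ0 hδ1 hA hAB]

lemma sobolevTerm_nonneg (s : ℝ) (c : ℤ × ℤ → ℂ) (m : ℤ × ℤ) : 0 ≤ sobolevTerm s c m :=
  mul_nonneg (sq_nonneg _) (Real.rpow_nonneg (latticeNormSq_nonneg m) s)

lemma doubleSobolevTerm_nonneg (δ : ℝ) (a : ℤ × ℤ → ℤ × ℤ → ℂ) (p : (ℤ × ℤ) × (ℤ × ℤ)) :
    0 ≤ doubleSobolevTerm δ a p := by
  have := latticeNormSq_nonneg p.1
  have := latticeNormSq_nonneg p.2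
  unfold doubleSobolevTerm
  positivity

lemma norm_sq_mul_latticeNormSq_sq_le_sobolevTerm {δ : ℝ} (hδ0 : 0 ≤ δ) (c : ℤ × ℤ → ℂ)
    (m : ℤ × ℤ) : ‖c m‖ ^ 2 * latticeNormSq m ^ 2 ≤ sobolevTerm (2 + δ) c m := by
  rcases eq_or_ne m 0 with rfl | hm
  · simpa using sobolevTerm_nonneg (2 + δ) c 0
  · unfold sobolevTerm
    rw [← Real.rpow_two (latticeNormSq m)]
    gcongr
    · exact one_le_latticeNormSq hm
    · linarith

lemma doubleSobolevTerm_torusCoeff_le {δ : ℝ} (hδ0 : 0 ≤ δ) (hδ1 : δ ≤ 1) (c : ℤ × ℤ → ℂ)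
    (p : (ℤ × ℤ) × (ℤ × ℤ)) :
    doubleSobolevTerm δ (torusCoeff c) p ≤ 12 * (sobolevTerm (2 + δ) c (p.1 + p.2) *
      (latticeNormSq p.1 ^ (δ - 2) + latticeNormSq p.2 ^ (δ - 2))) := by
  obtain ⟨l, l'⟩ := p
  have hsob := sobolevTerm_nonneg (2 + δ) c (l + l')
  have hl0 := latticeNormSq_nonneg l
  have hl0' := latticeNormSq_nonneg l'
  by_cases hzero : l = 0 ∨ l' = 0
  · have hcoeff : torusCoeff c l l' = 0 := by
      rcases hzero with rfl | rfl <;> simp [torusCoeff, latticeCross]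
    calc doubleSobolevTerm δ (torusCoeff c) (l, l') = 0 := by simp [doubleSobolevTerm, hcoeff]
      _ ≤ _ := by positivity
  · obtain ⟨hl, hl'⟩ := not_or.mp hzero
    calc doubleSobolevTerm δ (torusCoeff c) (l, l')
        ≤ (1 + latticeNormSq l + latticeNormSq l') ^ δ * (4 * sobolevTerm (2 + δ) c (l + l') *
            (1 / (latticeNormSq l * latticeNormSq l'))) := by
          unfold doubleSobolevTerm
          gcongr
          refine (norm_sq_torusCoeff_le c hl hl').trans ?_
          gcongr
          exact norm_sq_mul_latticeNormSq_sq_le_sobolevTerm hδ0 c _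
      _ = 4 * sobolevTerm (2 + δ) c (l + l') * ((1 + latticeNormSq l + latticeNormSq l') ^ δ *
            (1 / (latticeNormSq l * latticeNormSq l'))) := by ring
      _ ≤ 4 * sobolevTerm (2 + δ) c (l + l') *
            (3 * (latticeNormSq l ^ (δ - 2) + latticeNormSq l' ^ (δ - 2))) := by
          refine mul_le_mul_of_nonneg_left ?_ (by positivity)
          exact one_add_add_rpow_mul_le hδ0 hδ1 (one_le_latticeNormSq hl)
            (one_le_latticeNormSq hl')
      _ = _ := by ring

lemma hasSum_add_mul_add {G : Type*} [AddCommGroup G] {f g : G → ℝ} (hf : Summable f)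
    (hg : Summable g) (hf0 : 0 ≤ f) (hg0 : 0 ≤ g) :
    HasSum (fun p : G × G => f (p.1 + p.2) * (g p.1 + g p.2))
      (2 * ((∑' x, f x) * ∑' x, g x)) := by
  have hprod : HasSum (fun p : G × G => g p.1 * f p.2) ((∑' x, g x) * ∑' x, f x) :=
    hg.hasSum.mul hf.hasSum (hg.mul_of_nonneg hf hg0 hf0)
  have hfst : HasSum (fun p : G × G => g p.1 * f (p.1 + p.2)) ((∑' x, g x) * ∑' x, f x) :=
    ((Equiv.prodShear (Equiv.refl G) Equiv.addLeft).hasSum_iff).mpr hprod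
  have hsnd : HasSum (fun p : G × G => g p.2 * f (p.2 + p.1)) ((∑' x, g x) * ∑' x, f x) :=
    (Equiv.prodComm G G).hasSum_iff.mpr hfst
  convert hfst.add hsnd using 1
  · funext p
    rw [add_comm p.2]
    ring
  · ring

lemma hasSum_torusCoeff_majorant {δ : ℝ} (hδ1 : δ < 1) {c : ℤ × ℤ → ℂ}
    (hc : Summable (sobolevTerm (2 + δ) c)) :
    HasSum (fun p : (ℤ × ℤ) × (ℤ × ℤ) => 12 * (sobolevTerm (2 + δ) c (p.1 + p.2) *
        (latticeNormSq p.1 ^ (δ - 2) + latticeNormSq p.2 ^ (δ - 2))))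
      (12 * (2 * ((∑' m, sobolevTerm (2 + δ) c m) * ∑' l, latticeNormSq l ^ (δ - 2)))) :=
  (hasSum_add_mul_add hc (summable_latticeNormSq_rpow (by linarith)) (sobolevTerm_nonneg _ c)
    fun l => Real.rpow_nonneg (latticeNormSq_nonneg l) _).mul_left 12

theorem summable_doubleSobolevTerm_torusCoeff {δ : ℝ} (hδ0 : 0 ≤ δ) (hδ1 : δ < 1)
    {c : ℤ × ℤ → ℂ} (hc : Summable (sobolevTerm (2 + δ) c)) :
    Summable (doubleSobolevTerm δ (torusCoeff c)) :=
  (hasSum_torusCoeff_majorant hδ1 hc).summable.of_nonneg_of_le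
    (doubleSobolevTerm_nonneg δ _) (doubleSobolevTerm_torusCoeff_le hδ0 hδ1.le c)

theorem tsum_doubleSobolevTerm_torusCoeff_le {δ : ℝ} (hδ0 : 0 ≤ δ) (hδ1 : δ < 1)
    {c : ℤ × ℤ → ℂ} (hc : Summable (sobolevTerm (2 + δ) c)) :
    ∑' p, doubleSobolevTerm δ (torusCoeff c) p ≤
      24 * (∑' l, latticeNormSq l ^ (δ - 2)) * ∑' m, sobolevTerm (2 + δ) c m := by
  refine (hasSum_le (doubleSobolevTerm_torusCoeff_le hδ0 hδ1.le c)
    (summable_doubleSobolevTerm_torusCoeff hδ0 hδ1 hc).hasSum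
    (hasSum_torusCoeff_majorant hδ1 hc)).trans_eq ?_
  ring

end TorusEstimate

section Reflection

lemma Hcoeff_eq_torusCoeff_sub (c : ℤ × ℤ → ℂ) (l l' : ℤ × ℤ) :
    Hcoeff c l l' =
      1 / (4 * Complex.I) * (torusCoeff c l l' - torusCoeff c l (latticeReflect l')) := by
  simp only [Hcoeff, torusCoeff, latticeNormSq_reflect]
  simp only [latticeNormSq, latticeCross, latticeReflect, Equiv.prodCongr_apply, Equiv.coe_refl,
    Equiv.neg_apply, Prod.map, id, Prod.add_def, mul_neg, sub_neg_eq_add, ← sub_eq_add_neg]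
  push_cast
  ring

lemma norm_sq_Hcoeff_le (c : ℤ × ℤ → ℂ) (l l' : ℤ × ℤ) :
    ‖Hcoeff c l l'‖ ^ 2 ≤
      1 / 8 * (‖torusCoeff c l l'‖ ^ 2 + ‖torusCoeff c l (latticeReflect l')‖ ^ 2) := by
  have hfactor : ‖1 / (4 * Complex.I)‖ ^ 2 = 1 / 16 := by
    norm_num
  rw [Hcoeff_eq_torusCoeff_sub, norm_mul, mul_pow, hfactor]
  calc 1 / 16 * ‖torusCoeff c l l' - torusCoeff c l (latticeReflect l')‖ ^ 2
      ≤ 1 / 16 * (‖torusCoeff c l l'‖ + ‖torusCoeff c l (latticeReflect l')‖) ^ 2 := by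
        gcongr
        exact norm_sub_le _ _
    _ ≤ 1 / 16 * (2 * (‖torusCoeff c l l'‖ ^ 2 + ‖torusCoeff c l (latticeReflect l')‖ ^ 2)) := by
        gcongr
        exact add_sq_le
    _ = _ := by ring

lemma doubleSobolevTerm_Hcoeff_le (δ : ℝ) (c : ℤ × ℤ → ℂ) (l l' : ℤ × ℤ) :
    doubleSobolevTerm δ (Hcoeff c) (l, l') ≤ 1 / 8 * (doubleSobolevTerm δ (torusCoeff c) (l, l') +
      doubleSobolevTerm δ (torusCoeff c) (l, latticeReflect l')) := by
  have := latticeNormSq_nonneg l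
  have := latticeNormSq_nonneg l'
  simp only [doubleSobolevTerm, latticeNormSq_reflect]
  rw [← mul_add, mul_left_comm]
  gcongr
  exact norm_sq_Hcoeff_le c l l'

variable {δ : ℝ} {c : ℤ × ℤ → ℂ}

lemma hasSum_of_hasSum_Lam {M : Type*} [AddCommMonoid M] [TopologicalSpace M] [ContinuousAdd M]
    {f : ℤ × ℤ → M} {a : M} (hf : HasSum (fun l : Lam => f l) a)
    (hreflect : ∀ l, f (latticeReflect l) = f l) (haxis : ∀ m, f (m, 0) = 0) :
    HasSum f (a + a) := by
  have hupper : HasSum (Lam.indicator f) a := hasSum_subtype_iff_indicator.mp hf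
  have hlower : HasSum (Lam.indicator f ∘ latticeReflect) a := latticeReflect.hasSum_iff.mpr hupper
  convert hupper.add hlower using 1
  funext ⟨m, n⟩
  have hmem : (m, n) ∈ Lam ↔ 1 ≤ n := Iff.rfl
  have hmem_reflect : latticeReflect (m, n) ∈ Lam ↔ 1 ≤ -n := Iff.rfl
  classical
  rw [Function.comp_apply, Set.indicator_apply, Set.indicator_apply, hreflect]
  simp only [hmem, hmem_reflect]
  rcases lt_trichotomy n 0 with hn | rfl | hn
  · rw [if_neg (by omega), if_pos (by omega), zero_add]
  · simp [haxis]
  · rw [if_pos (by omega), if_neg (by omega), add_zero]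

lemma hasSum_sobolevTerm_of_odd {s : ℝ} (hodd : ∀ m n : ℤ, c (m, -n) = -c (m, n))
    (hc : Summable fun m : Lam => sobolevTerm s c m) :
    HasSum (sobolevTerm s c) (2 * ∑' m : Lam, sobolevTerm s c m) := by
  have hreflect (l : ℤ × ℤ) : sobolevTerm s c (latticeReflect l) = sobolevTerm s c l := by
    have hcl : c (latticeReflect l) = -c l := hodd l.1 l.2
    rw [sobolevTerm, latticeNormSq_reflect, hcl, norm_neg, sobolevTerm]
  have haxis (m : ℤ) : sobolevTerm s c (m, 0) = 0 := by
    have hcm : c (m, 0) = 0 := self_eq_neg.mp (by simpa using hodd m 0)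
    simp [sobolevTerm, hcm]
  rw [two_mul]
  exact hasSum_of_hasSum_Lam hc.hasSum hreflect haxis

lemma injective_Lam_prod_map (e : ℤ × ℤ ≃ ℤ × ℤ) :
    Function.Injective fun p : Lam × Lam => ((p.1 : ℤ × ℤ), e p.2) :=
  Subtype.val_injective.prodMap (e.injective.comp Subtype.val_injective)

lemma summable_doubleSobolevTerm_Hcoeff (hT : Summable (doubleSobolevTerm δ (torusCoeff c))) :
    Summable fun p : Lam × Lam => doubleSobolevTerm δ (Hcoeff c) (p.1, p.2) :=
  (((hT.comp_injective (injective_Lam_prod_map (Equiv.refl _))).add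
    (hT.comp_injective (injective_Lam_prod_map latticeReflect))).mul_left (1 / 8)).of_nonneg_of_le
      (fun _ => doubleSobolevTerm_nonneg δ _ _) fun p => doubleSobolevTerm_Hcoeff_le δ c p.1 p.2

lemma tsum_doubleSobolevTerm_Hcoeff_le (hT : Summable (doubleSobolevTerm δ (torusCoeff c))) :
    ∑' p : Lam × Lam, doubleSobolevTerm δ (Hcoeff c) (p.1, p.2) ≤
      1 / 4 * ∑' p, doubleSobolevTerm δ (torusCoeff c) p := by
  have hnonneg := doubleSobolevTerm_nonneg δ (torusCoeff c)
  have hid := injective_Lam_prod_map (Equiv.refl _)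
  have hreflect := injective_Lam_prod_map latticeReflect
  have hmajorant := ((hT.comp_injective hid).hasSum.add
    (hT.comp_injective hreflect).hasSum).mul_left (1 / 8)
  have hle := hasSum_le (fun p : Lam × Lam => doubleSobolevTerm_Hcoeff_le δ c p.1 p.2)
    (summable_doubleSobolevTerm_Hcoeff hT).hasSum hmajorant
  linarith [tsum_comp_le_tsum_of_inj hT hnonneg hid,
    tsum_comp_le_tsum_of_inj hT hnonneg hreflect]

end Reflection

/-- **Remark 3.2 (positive part): higher regularity of `H_φ`.** For every `0 ≤ δ < 1` there is a
constant `C_δ > 0` such that for every family of Fourier coefficients `c` (extended oddly in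
the second index) with `∑_{m∈ℤ,n≥1} |c_{m,n}|²(m²+n²)^{2+δ} < ∞` one has
`∑_{l,l'∈Λ} (1+|l|²+|l'|²)^δ |ℱ_lℱ_{l'}(H_φ)|² ≤ C_δ ∑_{m∈ℤ,n≥1} |c_{m,n}|²(m²+n²)^{2+δ}`;
i.e. `φ ∈ ℍ^{2+δ}` implies `H_φ ∈ ℍ^δ(D×D)` for every `δ < 1`. -/
theorem Hphi_higher_regularity (δ : ℝ) (hδ0 : 0 ≤ δ) (hδ1 : δ < 1) :
    ∃ C : ℝ, 0 < C ∧ ∀ c : ℤ × ℤ → ℂ,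
      (∀ m n : ℤ, c (m, -n) = -c (m, n)) →
      Summable (fun m : Lam =>
        ‖c m.1‖^2 * ((m.1.1 : ℝ)^2 + (m.1.2 : ℝ)^2) ^ ((2 : ℝ) + δ)) →
      Summable (fun p : Lam × Lam =>
        (1 + ((p.1.1.1 : ℝ)^2 + (p.1.1.2 : ℝ)^2) + ((p.2.1.1 : ℝ)^2 + (p.2.1.2 : ℝ)^2)) ^ δ *
          ‖Hcoeff c p.1.1 p.2.1‖^2) ∧
      ∑' p : Lam × Lam,
          (1 + ((p.1.1.1 : ℝ)^2 + (p.1.1.2 : ℝ)^2) + ((p.2.1.1 : ℝ)^2 + (p.2.1.2 : ℝ)^2)) ^ δ *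
            ‖Hcoeff c p.1.1 p.2.1‖^2
        ≤ C * ∑' m : Lam, ‖c m.1‖^2 * ((m.1.1 : ℝ)^2 + (m.1.2 : ℝ)^2) ^ ((2 : ℝ) + δ) := by
  have hW := tsum_latticeNormSq_rpow_pos (show δ - 2 < -1 by linarith)
  refine ⟨12 * ∑' l, latticeNormSq l ^ (δ - 2), by positivity, fun c hodd hc => ?_⟩
  have hsob := hasSum_sobolevTerm_of_odd hodd hc
  have hT := summable_doubleSobolevTerm_torusCoeff hδ0 hδ1 hsob.summable
  refine ⟨summable_doubleSobolevTerm_Hcoeff hT, ?_⟩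
  calc ∑' p : Lam × Lam, doubleSobolevTerm δ (Hcoeff c) (p.1, p.2)
      ≤ 1 / 4 * ∑' p, doubleSobolevTerm δ (torusCoeff c) p :=
        tsum_doubleSobolevTerm_Hcoeff_le hT
    _ ≤ 1 / 4 * (24 * (∑' l, latticeNormSq l ^ (δ - 2)) * ∑' m, sobolevTerm (2 + δ) c m) := by
        gcongr
        exact tsum_doubleSobolevTerm_torusCoeff_le hδ0 hδ1 hsob.summable
    _ = 12 * (∑' l, latticeNormSq l ^ (δ - 2)) * ∑' m : Lam, sobolevTerm (2 + δ) c m := by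
        rw [hsob.tsum_eq]
        ring
end
end

section
/- Optimality of the regularity of H_φ (Remark 3.2, sharpness): For every real number δ, the series ∑_{(j,k) ∈ ℤ×(ℕ∖{0}), j ≠ 0} (1 + 2j² + k² + (k−1)²)^δ · j²(2k−1)² / [ (j²+k²)² (j²+(k−1)²)² ] converges if and only if δ < 1. (This series expresses the squared ℍ^δ(D×D)-norm of the kernel H_φ for the test function φ(x,y)=sin(y), so that H_φ ∈ ℍ^δ(D×D) fails for δ ≥ 1 even for smooth φ.) -/
/-!
Put `N = j² + k²`. For `j ≠ 0` the weight `1 + 2j² + k² + (k-1)²` and the factor `j² + (k-1)²` are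
both comparable to `N`, and `j²(2k-1)² ≤ 5N²`; hence the term is `O(N ^ (δ-2))`. In the sector
`j ≤ k < 2j` the factor `j²(2k-1)²` is moreover comparable to `N²`, so there the term is bounded
below by a multiple of `N ^ (δ-2)`. The planar lattice sum of `N ^ s` converges for `s < -1`, and
for `s ≥ -1` it diverges already on the sector, whose `n`-th column contributes `≳ n · n⁻²`.
-/

/-- The `(x, y)` term of the series for the squared `ℍ^δ`-norm of the kernel `H_φ` with
`φ(x, y) = sin y`, the indices `j`, `k` being replaced by real variables. It takes the junk value
`0` at `(0, 0)` and `(0, 1)`, where the denominator vanishes. -/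
noncomputable def HphiTerm (δ x y : ℝ) : ℝ :=
  ((1 + 2 * x ^ 2 + y ^ 2 + (y - 1) ^ 2) ^ δ) * (x ^ 2 * (2 * y - 1) ^ 2) /
    ((x ^ 2 + y ^ 2) ^ 2 * (x ^ 2 + (y - 1) ^ 2) ^ 2)

theorem summable_subtype_of_imp {ι E : Type*} [AddCommGroup E] [UniformSpace E]
    [IsUniformAddGroup E] [CompleteSpace E] {P Q : ι → Prop} (f : ι → E)
    (hPQ : ∀ i, P i → Q i) (h : Summable fun i : {i // Q i} => f i) :
    Summable fun i : {i // P i} => f i :=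
  h.comp_injective (Subtype.map_injective hPQ Function.injective_id)

theorem rpow_le_rpow_abs_mul_rpow {a b c : ℝ} (ha : 0 < a) (hb : 0 < b) (hab : a ≤ c * b)
    (hba : b ≤ c * a) (s : ℝ) : a ^ s ≤ c ^ |s| * b ^ s := by
  have hc : 0 < c := pos_of_mul_pos_left (ha.trans_le hab) hb.le
  rcases le_total 0 s with hs | hs
  · calc a ^ s ≤ (c * b) ^ s := Real.rpow_le_rpow ha.le hab hs
      _ = c ^ |s| * b ^ s := by rw [Real.mul_rpow hc.le hb.le, abs_of_nonneg hs]
  · calc a ^ s ≤ (c⁻¹ * b) ^ s :=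
          Real.rpow_le_rpow_of_nonpos (by positivity) ((inv_mul_le_iff₀ hc).2 hba) hs
      _ = c ^ |s| * b ^ s := by
          rw [Real.mul_rpow (by positivity) hb.le, Real.inv_rpow hc.le, abs_of_nonpos hs,
            Real.rpow_neg hc.le]

section TermBounds

variable {x y : ℝ}

theorem sq_add_sq_le_weight (x y : ℝ) :
    x ^ 2 + y ^ 2 ≤ 1 + 2 * x ^ 2 + y ^ 2 + (y - 1) ^ 2 := by
  nlinarith [sq_nonneg x, sq_nonneg (y - 1)]

theorem weight_le_five_mul_sq_add_sq (hx : 1 ≤ x ^ 2) :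
    1 + 2 * x ^ 2 + y ^ 2 + (y - 1) ^ 2 ≤ 5 * (x ^ 2 + y ^ 2) := by
  nlinarith [sq_nonneg (y + 1)]

theorem sq_add_sq_le_three_mul_sq_add_sub_one_sq (hx : 1 ≤ x ^ 2) :
    x ^ 2 + y ^ 2 ≤ 3 * (x ^ 2 + (y - 1) ^ 2) := by
  nlinarith [sq_nonneg (2 * y - 3)]

theorem sq_mul_two_mul_sub_one_sq_le (hx : 1 ≤ x ^ 2) :
    x ^ 2 * (2 * y - 1) ^ 2 ≤ 5 * (x ^ 2 + y ^ 2) ^ 2 := by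
  have hxN : x ^ 2 ≤ x ^ 2 + y ^ 2 := le_add_of_nonneg_right (sq_nonneg y)
  have hyN : (2 * y - 1) ^ 2 ≤ 5 * (x ^ 2 + y ^ 2) := by nlinarith [sq_nonneg (y + 2)]
  calc x ^ 2 * (2 * y - 1) ^ 2 ≤ (x ^ 2 + y ^ 2) * (5 * (x ^ 2 + y ^ 2)) := by gcongr
    _ = 5 * (x ^ 2 + y ^ 2) ^ 2 := by ring

theorem sq_add_sq_sq_le_of_sector (hx : 1 ≤ x) (hxy : x ≤ y) (hyx : y ≤ 2 * x) :
    (x ^ 2 + y ^ 2) ^ 2 ≤ 25 * (x ^ 2 * (2 * y - 1) ^ 2) := by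
  have hN : x ^ 2 + y ^ 2 ≤ 5 * x ^ 2 := by nlinarith
  have hy : x ≤ 2 * y - 1 := by linarith
  calc (x ^ 2 + y ^ 2) ^ 2 ≤ (5 * x ^ 2) ^ 2 := by gcongr
    _ = 25 * (x ^ 2 * x ^ 2) := by ring
    _ ≤ 25 * (x ^ 2 * (2 * y - 1) ^ 2) := by gcongr

theorem HphiTerm_nonneg (δ x y : ℝ) : 0 ≤ HphiTerm δ x y := by
  unfold HphiTerm
  positivity

theorem HphiTerm_le (δ : ℝ) (hx : 1 ≤ x ^ 2) :
    HphiTerm δ x y ≤ 45 * 5 ^ |δ| * (x ^ 2 + y ^ 2) ^ (δ - 2) := by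
  have hN : 0 < x ^ 2 + y ^ 2 := by positivity
  have hNW := sq_add_sq_le_weight x y
  have hweight : (1 + 2 * x ^ 2 + y ^ 2 + (y - 1) ^ 2) ^ δ ≤ 5 ^ |δ| * (x ^ 2 + y ^ 2) ^ δ :=
    rpow_le_rpow_abs_mul_rpow (by positivity) hN (weight_le_five_mul_sq_add_sq hx)
      (by linarith) δ
  have hfactor := sq_mul_two_mul_sub_one_sq_le (y := y) hx
  have hM : (x ^ 2 + y ^ 2) / 3 ≤ x ^ 2 + (y - 1) ^ 2 := by
    linarith [sq_add_sq_le_three_mul_sq_add_sub_one_sq (y := y) hx]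
  calc HphiTerm δ x y
      ≤ 5 ^ |δ| * (x ^ 2 + y ^ 2) ^ δ * (5 * (x ^ 2 + y ^ 2) ^ 2) /
          ((x ^ 2 + y ^ 2) ^ 2 * ((x ^ 2 + y ^ 2) / 3) ^ 2) := by
        unfold HphiTerm
        gcongr ?_ * ?_ / (_ * ?_ ^ 2)
    _ = 45 * 5 ^ |δ| * (x ^ 2 + y ^ 2) ^ (δ - 2) := by
        rw [Real.rpow_sub hN, Real.rpow_two]
        field_simp
        ring

theorem le_HphiTerm_of_sector (δ : ℝ) (hx : 1 ≤ x) (hxy : x ≤ y) (hyx : y ≤ 2 * x) :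
    (x ^ 2 + y ^ 2) ^ (δ - 2) ≤ 25 * 5 ^ |δ| * HphiTerm δ x y := by
  have hx_sq : 1 ≤ x ^ 2 := one_le_pow₀ hx
  have hN : 0 < x ^ 2 + y ^ 2 := by positivity
  have hM : 0 < x ^ 2 + (y - 1) ^ 2 := by positivity
  have hMN : x ^ 2 + (y - 1) ^ 2 ≤ x ^ 2 + y ^ 2 := by nlinarith
  have hweight : (x ^ 2 + y ^ 2) ^ δ ≤ 5 ^ |δ| * (1 + 2 * x ^ 2 + y ^ 2 + (y - 1) ^ 2) ^ δ :=
    rpow_le_rpow_abs_mul_rpow hN (by positivity) (by linarith [sq_add_sq_le_weight x y])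
      (weight_le_five_mul_sq_add_sq hx_sq) δ
  calc (x ^ 2 + y ^ 2) ^ (δ - 2)
      = (x ^ 2 + y ^ 2) ^ δ * (x ^ 2 + y ^ 2) ^ 2 /
          ((x ^ 2 + y ^ 2) ^ 2 * (x ^ 2 + y ^ 2) ^ 2) := by
        rw [Real.rpow_sub hN, Real.rpow_two]
        field_simp
    _ ≤ 5 ^ |δ| * (1 + 2 * x ^ 2 + y ^ 2 + (y - 1) ^ 2) ^ δ *
          (25 * (x ^ 2 * (2 * y - 1) ^ 2)) /
          ((x ^ 2 + y ^ 2) ^ 2 * (x ^ 2 + (y - 1) ^ 2) ^ 2) := by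
        gcongr
        exact sq_add_sq_sq_le_of_sector hx hxy hyx
    _ = 25 * 5 ^ |δ| * HphiTerm δ x y := by
        unfold HphiTerm
        ring

end TermBounds

theorem norm_sq_le_sq_add_sq (v : Fin 2 → ℤ) : ‖v‖ ^ 2 ≤ (v 0 : ℝ) ^ 2 + (v 1 : ℝ) ^ 2 := by
  have hnorm : ‖v‖ ≤ √((v 0 : ℝ) ^ 2 + (v 1 : ℝ) ^ 2) := by
    refine (pi_norm_le_iff_of_nonneg (Real.sqrt_nonneg _)).2 (Fin.forall_fin_two.2 ⟨?_, ?_⟩)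
    · exact Real.abs_le_sqrt (le_add_of_nonneg_right (sq_nonneg _))
    · exact Real.abs_le_sqrt (le_add_of_nonneg_left (sq_nonneg _))
  exact (Real.le_sqrt (norm_nonneg v) (by positivity)).1 hnorm

theorem summable_sq_add_sq_rpow {s : ℝ} (hs : s < -1) :
    Summable fun p : ℤ × ℤ => ((p.1 : ℝ) ^ 2 + (p.2 : ℝ) ^ 2) ^ s := by
  have hnorm : Summable fun v : Fin 2 → ℤ => ‖v‖ ^ (-(-2 * s)) :=
    EisensteinSeries.summable_one_div_norm_rpow (by linarith)
  rw [← (finTwoArrowEquiv ℤ).summable_iff]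
  refine Summable.of_nonneg_of_le (fun v => by dsimp; positivity) (fun v => ?_) hnorm
  rcases eq_or_ne v 0 with rfl | hv
  · simp [Real.zero_rpow (by linarith : s ≠ 0), Real.rpow_nonneg]
  · have hv_pos : 0 < ‖v‖ := norm_pos_iff.2 hv
    calc ((v 0 : ℝ) ^ 2 + (v 1 : ℝ) ^ 2) ^ s ≤ (‖v‖ ^ 2) ^ s :=
          Real.rpow_le_rpow_of_nonpos (by positivity) (norm_sq_le_sq_add_sq v) (by linarith)
      _ = ‖v‖ ^ (-(-2 * s)) := by
          rw [← Real.rpow_natCast_mul hv_pos.le]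
          congr 1
          push_cast
          ring

theorem summable_natCast_mul_of_summable_sigma_fin {f : ℕ → ℝ}
    (hf : Summable fun q : Σ n : ℕ, Fin n => f q.1) : Summable fun n : ℕ => (n : ℝ) * f n := by
  simpa using hf.sigma

theorem not_summable_sigma_fin_inv_sq :
    ¬ Summable fun q : Σ n : ℕ, Fin n => ((q.1 : ℝ) ^ 2)⁻¹ := fun h => by
  have hcolumns : Summable fun n : ℕ => (n : ℝ) * ((n : ℝ) ^ 2)⁻¹ :=
    summable_natCast_mul_of_summable_sigma_fin (f := fun n => ((n : ℝ) ^ 2)⁻¹) h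
  refine Real.not_summable_natCast_inv (hcolumns.congr fun n => ?_)
  rcases eq_or_ne (n : ℝ) 0 with hn | hn
  · simp [hn]
  · field_simp

/-- The lattice points of the planar sector `j ≤ k < 2j`, on which both coordinates are positive
and comparable. -/
def latticeSector : Set (ℤ × ℤ) := {p | p.1 ≤ p.2 ∧ p.2 < 2 * p.1}

/-- The parametrization of `latticeSector` by columns: the `n`-th column is `{n} × [n, 2n)`. -/
def sectorColumn (q : Σ n : ℕ, Fin n) : latticeSector :=
  ⟨(q.1, q.1 + (q.2 : ℕ)), by simp only [latticeSector, Set.mem_ofPred_eq]; omega⟩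

theorem sectorColumn_injective : Function.Injective sectorColumn := by
  rintro ⟨n, i⟩ ⟨m, k⟩ h
  simp only [sectorColumn, Subtype.mk.injEq, Prod.mk.injEq, Nat.cast_inj] at h
  obtain ⟨rfl, hik⟩ := h
  obtain rfl : i = k := Fin.ext (by omega)
  rfl

theorem latticeSector_bounds {p : ℤ × ℤ} (hp : p ∈ latticeSector) :
    1 ≤ (p.1 : ℝ) ∧ (p.1 : ℝ) ≤ p.2 ∧ (p.2 : ℝ) ≤ 2 * p.1 := by
  obtain ⟨hle, hlt⟩ := hp
  exact ⟨by exact_mod_cast (by omega : 1 ≤ p.1), by exact_mod_cast hle, by exact_mod_cast hlt.le⟩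

theorem inv_sq_le_five_mul_sq_add_sq_rpow {s x y : ℝ} (hs : -1 ≤ s) (hx : 1 ≤ x) (hxy : x ≤ y)
    (hyx : y ≤ 2 * x) : (x ^ 2)⁻¹ ≤ 5 * (x ^ 2 + y ^ 2) ^ s := by
  have hN : 1 ≤ x ^ 2 + y ^ 2 := by nlinarith
  have hN5 : x ^ 2 + y ^ 2 ≤ 5 * x ^ 2 := by nlinarith
  calc (x ^ 2)⁻¹ = 5 * (5 * x ^ 2)⁻¹ := by field_simp
    _ ≤ 5 * (x ^ 2 + y ^ 2)⁻¹ := by gcongr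
    _ = 5 * (x ^ 2 + y ^ 2) ^ (-1 : ℝ) := by rw [Real.rpow_neg_one]
    _ ≤ 5 * (x ^ 2 + y ^ 2) ^ s := by gcongr

theorem not_summable_sq_add_sq_rpow_latticeSector {s : ℝ} (hs : -1 ≤ s) :
    ¬ Summable fun p : latticeSector => ((p.1.1 : ℝ) ^ 2 + (p.1.2 : ℝ) ^ 2) ^ s := fun h => by
  refine not_summable_sigma_fin_inv_sq (Summable.of_nonneg_of_le (fun q => by positivity)
    (fun q => ?_) ((h.comp_injective sectorColumn_injective).mul_left 5))
  obtain ⟨hx, hxy, hyx⟩ := latticeSector_bounds (sectorColumn q).2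
  exact inv_sq_le_five_mul_sq_add_sq_rpow hs hx hxy hyx

theorem summable_HphiTerm {δ : ℝ} (hδ : δ < 1) :
    Summable fun p : {p : ℤ × ℤ // p.1 ≠ 0} => HphiTerm δ p.1.1 p.1.2 := by
  have hlattice := (summable_sq_add_sq_rpow (by linarith : δ - 2 < -1)).comp_injective
    (Subtype.val_injective (p := fun p : ℤ × ℤ => p.1 ≠ 0))
  refine Summable.of_nonneg_of_le (fun p => HphiTerm_nonneg _ _ _) (fun p => ?_)
    (hlattice.mul_left (45 * 5 ^ |δ|))
  exact HphiTerm_le δ (by exact_mod_cast Int.add_one_le_of_lt (sq_pos_of_ne_zero p.2))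

theorem not_summable_HphiTerm_latticeSector {δ : ℝ} (hδ : 1 ≤ δ) :
    ¬ Summable fun p : latticeSector => HphiTerm δ p.1.1 p.1.2 := fun h => by
  refine not_summable_sq_add_sq_rpow_latticeSector (by linarith : -1 ≤ δ - 2)
    (Summable.of_nonneg_of_le (fun p => by positivity) (fun p => ?_)
      (h.mul_left (25 * 5 ^ |δ|)))
  obtain ⟨hx, hxy, hyx⟩ := latticeSector_bounds p.2
  exact le_HphiTerm_of_sector δ hx hxy hyx

/-- **Optimality of the regularity of `H_φ`** (Remark 3.2, sharpness). For every real `δ`, the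
series `∑_{(j,k) ∈ ℤ×(ℕ∖{0}), j ≠ 0} (1 + 2j² + k² + (k−1)²)^δ · j²(2k−1)² /
((j²+k²)²(j²+(k−1)²)²)` converges if and only if `δ < 1`. -/
theorem Hphi_sharp_regularity (δ : ℝ) :
    Summable (fun l : {l : ℤ × ℤ // l.1 ≠ 0 ∧ 1 ≤ l.2} =>
      ((1 + 2 * (l.1.1 : ℝ)^2 + (l.1.2 : ℝ)^2 + ((l.1.2 : ℝ) - 1)^2) ^ δ) *
        ((l.1.1 : ℝ)^2 * (2 * (l.1.2 : ℝ) - 1)^2) /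
          (((l.1.1 : ℝ)^2 + (l.1.2 : ℝ)^2)^2 *
            ((l.1.1 : ℝ)^2 + ((l.1.2 : ℝ) - 1)^2)^2)) ↔ δ < 1 := by
  change Summable (fun l : {l : ℤ × ℤ // l.1 ≠ 0 ∧ 1 ≤ l.2} => HphiTerm δ l.1.1 l.1.2) ↔ δ < 1
  let coeff : ℤ × ℤ → ℝ := fun l => HphiTerm δ l.1 l.2
  refine ⟨fun h => ?_, fun hδ => ?_⟩
  · by_contra! hδ
    have hsector : ∀ l ∈ latticeSector, l.1 ≠ 0 ∧ 1 ≤ l.2 := fun l ⟨_, _⟩ => by omega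
    exact not_summable_HphiTerm_latticeSector hδ (summable_subtype_of_imp coeff hsector h)
  · exact summable_subtype_of_imp coeff (fun _ => And.left) (summable_HphiTerm hδ)
end

section
/- Lattice sum characterization: For every real number δ, the double series ∑_{(j,k) ∈ ℤ×(ℕ∖{0})} j²k² / (j²+k²)^{4−δ} converges if and only if δ < 1. -/
/-!
Write `q = j² + k²`. Since `j²k² ≤ q²`, the general term is at most `q ^ (δ - 2)`, and `∑ q ^ (-s)`
over the nonzero points of `ℤ²` converges for `s > 1`. Conversely, for `δ ≥ 1` each of the `k`
points with `k ≤ j < 2k` in row `k` contributes at least a constant times `1 / k²`, so the series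
dominates a multiple of the harmonic series.
-/

theorem sq_pi_norm_le_sum_sq_norm {ι : Type*} [Fintype ι] {E : ι → Type*}
    [∀ i, SeminormedAddCommGroup (E i)] (v : ∀ i, E i) : ‖v‖ ^ 2 ≤ ∑ i, ‖v i‖ ^ 2 := by
  rw [← Real.le_sqrt (norm_nonneg v) (by positivity),
    pi_norm_le_iff_of_nonneg (Real.sqrt_nonneg _)]
  exact fun i => Real.le_sqrt_of_sq_le <|
    Finset.single_le_sum (fun j _ => sq_nonneg ‖v j‖) (Finset.mem_univ i)

theorem summable_sq_add_sq_rpow_neg {s : ℝ} (hs : 1 < s) :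
    Summable fun p : ℤ × ℤ => ((p.1 : ℝ) ^ 2 + (p.2 : ℝ) ^ 2) ^ (-s) := by
  have summable_norm : Summable fun v : Fin 2 → ℤ => ‖v‖ ^ (-(2 * s)) :=
    EisensteinSeries.summable_one_div_norm_rpow (by linarith)
  rw [← (finTwoArrowEquiv ℤ).summable_iff]
  refine summable_norm.of_nonneg_of_le (fun v => Real.rpow_nonneg (by positivity) _) fun v => ?_
  obtain rfl | hv := eq_or_ne v 0
  · simp [Real.zero_rpow (show -s ≠ 0 by linarith), Real.zero_rpow (show -(2 * s) ≠ 0 by linarith)]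
  have sq_norm_le : ‖v‖ ^ 2 ≤ (v 0 : ℝ) ^ 2 + (v 1 : ℝ) ^ 2 := by
    simpa [Fin.sum_univ_two, Int.norm_eq_abs] using sq_pi_norm_le_sum_sq_norm v
  calc ((v 0 : ℝ) ^ 2 + (v 1 : ℝ) ^ 2) ^ (-s)
      ≤ (‖v‖ ^ 2) ^ (-s) :=
        Real.rpow_le_rpow_of_nonpos (by positivity) sq_norm_le (by linarith)
    _ = ‖v‖ ^ (-(2 * s)) := by
        rw [← Real.rpow_natCast_mul (norm_nonneg v)]
        push_cast
        ring_nf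

theorem sq_mul_sq_div_rpow_le (x y s : ℝ) :
    x ^ 2 * y ^ 2 / (x ^ 2 + y ^ 2) ^ s ≤ (x ^ 2 + y ^ 2) ^ (2 - s) := by
  obtain hq | hq := (show 0 ≤ x ^ 2 + y ^ 2 by positivity).eq_or_lt
  · have hx : x ^ 2 = 0 := by linarith [sq_nonneg x, sq_nonneg y]
    rw [hx, zero_mul, zero_div]
    positivity
  · rw [Real.rpow_sub hq, Real.rpow_two]
    gcongr
    nlinarith [sq_nonneg x, sq_nonneg y, mul_nonneg (sq_nonneg x) (sq_nonneg y)]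

theorem summable_sq_mul_sq_div_rpow {s : ℝ} (hs : 3 < s) :
    Summable fun p : ℤ × ℤ =>
      (p.1 : ℝ) ^ 2 * (p.2 : ℝ) ^ 2 / ((p.1 : ℝ) ^ 2 + (p.2 : ℝ) ^ 2) ^ s := by
  have summable_bound := summable_sq_add_sq_rpow_neg (s := s - 2) (by linarith)
  simp only [neg_sub] at summable_bound
  exact summable_bound.of_nonneg_of_le (fun p => by positivity)
    fun p => sq_mul_sq_div_rpow_le p.1 p.2 s

theorem mul_one_div_sq_le_sq_mul_sq_div_rpow {x y s : ℝ} (hy : 1 ≤ y) (hyx : y ≤ x)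
    (hxy : x ≤ 2 * y) (hs : s ≤ 3) :
    1 / 125 * (1 / y ^ 2) ≤ x ^ 2 * y ^ 2 / (x ^ 2 + y ^ 2) ^ s := by
  have one_le : 1 ≤ x ^ 2 + y ^ 2 := by nlinarith
  have le_five_mul : x ^ 2 + y ^ 2 ≤ 5 * y ^ 2 := by nlinarith
  have rpow_le : (x ^ 2 + y ^ 2) ^ s ≤ (5 * y ^ 2) ^ 3 :=
    calc (x ^ 2 + y ^ 2) ^ s
        ≤ (x ^ 2 + y ^ 2) ^ (3 : ℝ) := Real.rpow_le_rpow_of_exponent_le one_le hs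
      _ = (x ^ 2 + y ^ 2) ^ 3 := Real.rpow_ofNat _ 3
      _ ≤ (5 * y ^ 2) ^ 3 := by gcongr
  calc 1 / 125 * (1 / y ^ 2)
      = y ^ 2 * y ^ 2 / (5 * y ^ 2) ^ 3 := by field_simp; norm_num
    _ ≤ x ^ 2 * y ^ 2 / (x ^ 2 + y ^ 2) ^ s := by gcongr

theorem summable_card_nsmul_of_summable_sigma {ι : Type*} {β : ι → Type*} [∀ i, Fintype (β i)]
    {E : Type*} [NormedAddCommGroup E] [CompleteSpace E] {f : ι → E}
    (hf : Summable fun p : Σ i, β i => f p.1) : Summable fun i => Fintype.card (β i) • f i := by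
  simpa using hf.sigma

theorem not_summable_sigma_fin_one_div_sq :
    ¬ Summable fun p : Σ n : ℕ, Fin n => 1 / (p.1 : ℝ) ^ 2 := by
  intro h
  refine Real.not_summable_one_div_natCast <|
    (summable_card_nsmul_of_summable_sigma (f := fun n : ℕ => 1 / (n : ℝ) ^ 2) h).congr fun n => ?_
  rw [Fintype.card_fin, nsmul_eq_mul]
  field_simp

/-- The lattice points `(j, k)` of the cone `k ≤ j < 2k` in the upper half-plane, parametrized by
the row `k` and the offset `j - k`. -/
def coneLatticePoint (p : Σ n : ℕ, Fin n) : {l : ℤ × ℤ // 1 ≤ l.2} :=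
  ⟨(p.1 + (p.2 : ℕ), p.1), Nat.one_le_cast.2 p.2.pos⟩

theorem coneLatticePoint_injective : Function.Injective coneLatticePoint := by
  rintro ⟨n, i⟩ ⟨m, j⟩ h
  simp only [coneLatticePoint, Subtype.mk.injEq, Prod.mk.injEq, Nat.cast_inj] at h
  obtain ⟨hij, rfl⟩ := h
  obtain rfl : i = j := Fin.ext (by omega)
  rfl

theorem not_summable_upperHalf_sq_mul_sq_div_rpow {s : ℝ} (hs : s ≤ 3) :
    ¬ Summable fun l : {l : ℤ × ℤ // 1 ≤ l.2} =>
      (l.1.1 : ℝ) ^ 2 * (l.1.2 : ℝ) ^ 2 / ((l.1.1 : ℝ) ^ 2 + (l.1.2 : ℝ) ^ 2) ^ s := by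
  intro h
  have summable_scaled :
      Summable fun p : Σ n : ℕ, Fin n => (1 / 125 : ℝ) * (1 / (p.1 : ℝ) ^ 2) := by
    refine (h.comp_injective coneLatticePoint_injective).of_nonneg_of_le
      (fun p => by positivity) fun ⟨n, i⟩ => ?_
    have one_le : (1 : ℝ) ≤ n := by exact_mod_cast i.pos
    have i_le : ((i : ℕ) : ℝ) ≤ n := by exact_mod_cast i.is_lt.le
    simpa [coneLatticePoint] using mul_one_div_sq_le_sq_mul_sq_div_rpow (x := n + (i : ℕ)) one_le
      (by simp) (by linarith) hs
  exact not_summable_sigma_fin_one_div_sq ((summable_mul_left_iff (by norm_num)).1 summable_scaled)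

/-- **Lattice sum characterization.** For every real `δ`, the double series
`∑_{(j,k) ∈ ℤ×(ℕ∖{0})} j²k² / (j²+k²)^(4−δ)` converges if and only if `δ < 1`. -/
theorem lattice_sum_summable_iff (δ : ℝ) :
    Summable (fun l : {l : ℤ × ℤ // 1 ≤ l.2} =>
      ((l.1.1 : ℝ)^2 * (l.1.2 : ℝ)^2) /
        (((l.1.1 : ℝ)^2 + (l.1.2 : ℝ)^2) ^ ((4 : ℝ) - δ))) ↔ δ < 1 := by
  refine ⟨fun h => ?_, fun hδ => ?_⟩
  · by_contra! hδ
    exact not_summable_upperHalf_sq_mul_sq_div_rpow (by linarith) h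
  · exact (summable_sq_mul_sq_div_rpow (by linarith)).comp_injective Subtype.val_injective
end

section
/- Key quadratic-form estimate (from the proof of Lemma 3.1): There exists a constant C > 0 such that for every m = (m₁,m₂) ∈ Λ, ∑_{l=(j,k) ∈ Λ, l ≠ m} (j m₂ − k m₁)² · ( 1/(j²+k²) − 1/((m₁−j)²+(m₂−k)²) )² ≤ C (m₁²+m₂²)². (Here j m₂ − k m₁ = l^⊥·m = l^⊥·(m−l) with l^⊥ = (−k,j).) -/
/-!
Write `x` for the lattice point `l`, `y` for `m` and `z = y - x`. The wedge `j m₂ - k m₁` is the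
area of the parallelogram spanned by `x, y`, and equally by `z, y`, so its square is at most both
`‖x‖² ‖y‖²` and `‖z‖² ‖y‖²`. The difference `‖z‖² - ‖x‖² = ⟪z - x, y⟫` is controlled by
`‖z - x‖² ≤ 2 (‖x‖² + ‖z‖²)`. Together these bound the summand by
`4 ‖y‖⁴ / (‖x‖² ‖z‖²) ≤ 2 ‖y‖⁴ (‖x‖⁻⁴ + ‖z‖⁻⁴)`, and `∑ ‖x‖⁻⁴` converges over a planar lattice.
-/

open scoped RealInnerProductSpace

section InnerProductSpace

variable {E : Type*} [NormedAddCommGroup E] [InnerProductSpace ℝ E] {x y : E}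

/-- The squared area of the parallelogram spanned by two vectors of a real inner product space,
written as their Gram determinant so that no orientation or dimension has to be fixed. -/
noncomputable def sqArea (x y : E) : ℝ := ‖x‖ ^ 2 * ‖y‖ ^ 2 - ⟪x, y⟫ ^ 2

lemma sqArea_nonneg (x y : E) : 0 ≤ sqArea x y := by
  rw [sqArea, sub_nonneg, ← mul_pow, sq_le_sq, abs_of_nonneg (by positivity : 0 ≤ ‖x‖ * ‖y‖)]
  exact abs_real_inner_le_norm x y

lemma sqArea_le (x y : E) : sqArea x y ≤ ‖x‖ ^ 2 * ‖y‖ ^ 2 :=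
  sub_le_self _ (sq_nonneg _)

lemma sqArea_sub_left (x y : E) : sqArea (y - x) y = sqArea x y := by
  simp only [sqArea, norm_sub_sq_real, inner_sub_left, real_inner_self_eq_norm_sq,
    real_inner_comm x y]
  ring

/-- The squared coefficient coupling the Fourier modes `x`, `y - x` and `y`: the summand of the
quadratic form, for vectors of a real inner product space. It is meaningful for `x ≠ 0` and
`x ≠ y`, where no division by zero occurs. -/
noncomputable def sqCoupling (x y : E) : ℝ :=
  sqArea x y * (1 / ‖x‖ ^ 2 - 1 / ‖y - x‖ ^ 2) ^ 2

lemma sqCoupling_nonneg (x y : E) : 0 ≤ sqCoupling x y :=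
  mul_nonneg (sqArea_nonneg x y) (sq_nonneg _)

lemma norm_sub_sq_sub_norm_sq_sq_le (x y : E) :
    (‖y - x‖ ^ 2 - ‖x‖ ^ 2) ^ 2 ≤ 2 * ‖y‖ ^ 2 * (‖x‖ ^ 2 + ‖y - x‖ ^ 2) := by
  have difference_eq_inner : ‖y - x‖ ^ 2 - ‖x‖ ^ 2 = ⟪y - x - x, y⟫ := by
    rw [norm_sub_sq_real, inner_sub_left, inner_sub_left, real_inner_self_eq_norm_sq,
      real_inner_comm x y]
    ring
  have norm_le : ‖y - x - x‖ ^ 2 ≤ 2 * (‖x‖ ^ 2 + ‖y - x‖ ^ 2) := by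
    linarith [parallelogram_law_with_norm ℝ (y - x) x, sq_nonneg ‖y - x + x‖]
  calc (‖y - x‖ ^ 2 - ‖x‖ ^ 2) ^ 2
      ≤ ‖y - x - x‖ ^ 2 * ‖y‖ ^ 2 := by
        rw [difference_eq_inner]
        exact sub_nonneg.mp (sqArea_nonneg (y - x - x) y)
    _ ≤ 2 * (‖x‖ ^ 2 + ‖y - x‖ ^ 2) * ‖y‖ ^ 2 := by gcongr
    _ = 2 * ‖y‖ ^ 2 * (‖x‖ ^ 2 + ‖y - x‖ ^ 2) := by ring

lemma sqArea_mul_norm_sub_sq_sub_norm_sq_sq_le (x y : E) :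
    sqArea x y * (‖y - x‖ ^ 2 - ‖x‖ ^ 2) ^ 2 ≤ 4 * ‖y‖ ^ 4 * (‖x‖ ^ 2 * ‖y - x‖ ^ 2) := by
  have area_le_left : sqArea x y ≤ ‖x‖ ^ 2 * ‖y‖ ^ 2 := sqArea_le x y
  have area_le_right : sqArea x y ≤ ‖y - x‖ ^ 2 * ‖y‖ ^ 2 :=
    sqArea_sub_left x y ▸ sqArea_le (y - x) y
  calc sqArea x y * (‖y - x‖ ^ 2 - ‖x‖ ^ 2) ^ 2
      ≤ sqArea x y * (2 * ‖y‖ ^ 2 * (‖x‖ ^ 2 + ‖y - x‖ ^ 2)) := by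
        gcongr
        exacts [sqArea_nonneg x y, norm_sub_sq_sub_norm_sq_sq_le x y]
    _ = 2 * ‖y‖ ^ 2 * (sqArea x y * ‖x‖ ^ 2 + sqArea x y * ‖y - x‖ ^ 2) := by ring
    _ ≤ 2 * ‖y‖ ^ 2 *
          (‖y - x‖ ^ 2 * ‖y‖ ^ 2 * ‖x‖ ^ 2 + ‖x‖ ^ 2 * ‖y‖ ^ 2 * ‖y - x‖ ^ 2) := by gcongr
    _ = 4 * ‖y‖ ^ 4 * (‖x‖ ^ 2 * ‖y - x‖ ^ 2) := by ring

lemma sqCoupling_le (hx : x ≠ 0) (hxy : x ≠ y) :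
    sqCoupling x y ≤ 2 * ‖y‖ ^ 4 * ((‖x‖ ^ 4)⁻¹ + (‖y - x‖ ^ 4)⁻¹) := by
  have norm_sub_pos : 0 < ‖y - x‖ := norm_pos_iff.mpr (sub_ne_zero.mpr hxy.symm)
  calc sqCoupling x y
      = sqArea x y * (‖y - x‖ ^ 2 - ‖x‖ ^ 2) ^ 2 / (‖x‖ ^ 2 * ‖y - x‖ ^ 2) ^ 2 := by
        rw [sqCoupling]
        field_simp
    _ ≤ 4 * ‖y‖ ^ 4 * (‖x‖ ^ 2 * ‖y - x‖ ^ 2) / (‖x‖ ^ 2 * ‖y - x‖ ^ 2) ^ 2 :=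
        div_le_div_of_nonneg_right (sqArea_mul_norm_sub_sq_sub_norm_sq_sq_le x y) (by positivity)
    _ = 2 * ‖y‖ ^ 4 * (2 * (‖x‖ ^ 2)⁻¹ * (‖y - x‖ ^ 2)⁻¹) := by
        field_simp
        ring
    _ ≤ 2 * ‖y‖ ^ 4 * (((‖x‖ ^ 2)⁻¹) ^ 2 + ((‖y - x‖ ^ 2)⁻¹) ^ 2) := by
        gcongr
        exact two_mul_le_add_sq _ _
    _ = 2 * ‖y‖ ^ 4 * ((‖x‖ ^ 4)⁻¹ + (‖y - x‖ ^ 4)⁻¹) := by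
        simp only [inv_pow, ← pow_mul, Nat.reduceMul]

end InnerProductSpace

section Summation

lemma summable_and_tsum_le_of_subtype_imp {α : Type*} {p q : α → Prop} (hpq : ∀ a, p a → q a)
    {f : Subtype q → ℝ} {B : ℝ} (hf_nonneg : ∀ a, 0 ≤ f a) (hf : Summable f ∧ ∑' a, f a ≤ B) :
    Summable (fun a : Subtype p ↦ f ⟨a, hpq a a.2⟩) ∧
      ∑' a : Subtype p, f ⟨a, hpq a a.2⟩ ≤ B := by
  have inclusion_injective : Function.Injective fun a : Subtype p ↦ (⟨a, hpq a a.2⟩ : Subtype q) :=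
    Subtype.map_injective hpq Function.injective_id
  exact ⟨hf.1.comp_injective inclusion_injective,
    (tsum_comp_le_tsum_of_inj hf.1 hf_nonneg inclusion_injective).trans hf.2⟩

variable {G : Type*} [AddCommGroup G]

lemma summable_and_tsum_le_of_le_add_reflection {s : Set G} {f : G → ℝ} {t : s → ℝ} {c : ℝ}
    (m : G) (hf : Summable f) (hf_nonneg : ∀ l, 0 ≤ f l) (hc : 0 ≤ c) (ht_nonneg : ∀ l, 0 ≤ t l)
    (ht_le : ∀ l : s, t l ≤ c * (f l + f (m - l))) :
    Summable t ∧ ∑' l, t l ≤ 2 * c * ∑' l, f l := by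
  have reflection_injective : Function.Injective fun l : s ↦ m - (l : G) :=
    sub_right_injective.comp Subtype.val_injective
  have summable_direct : Summable fun l : s ↦ f l := hf.comp_injective Subtype.val_injective
  have summable_reflected : Summable fun l : s ↦ f (m - l) :=
    hf.comp_injective reflection_injective
  have summable_bound := (summable_direct.add summable_reflected).mul_left c
  have summable_t : Summable t := .of_nonneg_of_le ht_nonneg ht_le summable_bound
  refine ⟨summable_t, ?_⟩
  calc ∑' l, t l ≤ ∑' l : s, c * (f l + f (m - l)) := summable_t.tsum_le_tsum ht_le summable_bound
    _ = c * (∑' l : s, f l + ∑' l : s, f (m - l)) := by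
        rw [tsum_mul_left, summable_direct.tsum_add summable_reflected]
    _ ≤ c * (∑' l, f l + ∑' l, f l) := by
        gcongr
        exacts [tsum_comp_le_tsum_of_inj hf hf_nonneg Subtype.val_injective,
          tsum_comp_le_tsum_of_inj hf hf_nonneg reflection_injective]
    _ = 2 * c * ∑' l, f l := by ring

theorem summable_and_tsum_sqCoupling_le {E : Type*} [NormedAddCommGroup E] [InnerProductSpace ℝ E]
    {φ : G →+ E} (hφ : Function.Injective φ) (hsum : Summable fun l ↦ (‖φ l‖ ^ 4)⁻¹) (m : G) :
    Summable (fun l : {l : G // l ≠ 0 ∧ l ≠ m} ↦ sqCoupling (φ l) (φ m)) ∧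
      ∑' l : {l : G // l ≠ 0 ∧ l ≠ m}, sqCoupling (φ l) (φ m) ≤
        4 * (∑' l, (‖φ l‖ ^ 4)⁻¹) * ‖φ m‖ ^ 4 := by
  have coupling_le (l : {l : G // l ≠ 0 ∧ l ≠ m}) : sqCoupling (φ l) (φ m) ≤
      2 * ‖φ m‖ ^ 4 * ((‖φ l‖ ^ 4)⁻¹ + (‖φ (m - l)‖ ^ 4)⁻¹) := by
    rw [map_sub]
    exact sqCoupling_le ((map_ne_zero_iff φ hφ).mpr l.2.1) (hφ.ne l.2.2)
  obtain ⟨summable, tsum_le⟩ := summable_and_tsum_le_of_le_add_reflection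
    (s := {l | l ≠ 0 ∧ l ≠ m}) m hsum (fun _ ↦ by positivity) (by positivity)
    (fun _ ↦ sqCoupling_nonneg _ _) coupling_le
  exact ⟨summable, tsum_le.trans_eq (by ring)⟩

end Summation

section SquareLattice

/-- The square lattice `ℤ²` as a lattice in the Euclidean plane, for which we take `ℂ` because
`ℝ × ℝ` carries the sup norm. -/
def latticePoint : ℤ × ℤ →+ ℂ where
  toFun l := ⟨l.1, l.2⟩
  map_zero' := by simp [Complex.ext_iff]
  map_add' := by simp [Complex.ext_iff]

lemma latticePoint_injective : Function.Injective latticePoint := fun l m h ↦ by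
  simpa [latticePoint, Prod.ext_iff] using h

lemma sq_norm_latticePoint (l : ℤ × ℤ) : ‖latticePoint l‖ ^ 2 = (l.1 : ℝ) ^ 2 + (l.2 : ℝ) ^ 2 := by
  rw [Complex.sq_norm, Complex.normSq_apply, sq, sq]
  rfl

lemma sqArea_latticePoint (l m : ℤ × ℤ) :
    sqArea (latticePoint l) (latticePoint m) =
      ((l.1 : ℝ) * (m.2 : ℝ) - (l.2 : ℝ) * (m.1 : ℝ)) ^ 2 := by
  rw [sqArea, sq_norm_latticePoint, sq_norm_latticePoint, Complex.inner]
  simp only [latticePoint, AddMonoidHom.coe_mk, ZeroHom.coe_mk, Complex.mul_re, Complex.conj_re,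
    Complex.conj_im]
  ring

lemma sqCoupling_latticePoint (l m : ℤ × ℤ) :
    sqCoupling (latticePoint l) (latticePoint m) =
      ((l.1 : ℝ) * (m.2 : ℝ) - (l.2 : ℝ) * (m.1 : ℝ)) ^ 2 *
        (1 / ((l.1 : ℝ) ^ 2 + (l.2 : ℝ) ^ 2)
          - 1 / (((m.1 : ℝ) - (l.1 : ℝ)) ^ 2 + ((m.2 : ℝ) - (l.2 : ℝ)) ^ 2)) ^ 2 := by
  rw [sqCoupling, sqArea_latticePoint, ← map_sub, sq_norm_latticePoint, sq_norm_latticePoint,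
    Prod.fst_sub, Prod.snd_sub, Int.cast_sub, Int.cast_sub]

lemma norm_finTwo_le_norm_latticePoint (l : ℤ × ℤ) : ‖![l.1, l.2]‖ ≤ ‖latticePoint l‖ := by
  have fst_le : |(l.1 : ℝ)| ≤ ‖latticePoint l‖ := Complex.abs_re_le_norm (latticePoint l)
  have snd_le : |(l.2 : ℝ)| ≤ ‖latticePoint l‖ := Complex.abs_im_le_norm (latticePoint l)
  rw [pi_norm_le_iff_of_nonneg (norm_nonneg _), Fin.forall_fin_two]
  exact ⟨fst_le, snd_le⟩

lemma summable_inv_norm_latticePoint_pow {n : ℕ} (hn : 2 < n) :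
    Summable fun l ↦ (‖latticePoint l‖ ^ n)⁻¹ := by
  have summable_supNorm : Summable fun l : ℤ × ℤ ↦ ‖![l.1, l.2]‖ ^ (-(n : ℝ)) :=
    (finTwoArrowEquiv ℤ).symm.summable_iff.mpr
      (EisensteinSeries.summable_one_div_norm_rpow (mod_cast hn))
  refine .of_nonneg_of_le (fun _ ↦ by positivity) (fun l ↦ ?_) summable_supNorm
  rw [Real.rpow_neg (norm_nonneg _), Real.rpow_natCast]
  rcases eq_or_ne l 0 with rfl | hl
  · simp [show n ≠ 0 by lia]
  · have : 0 < ‖![l.1, l.2]‖ := by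
      rw [norm_pos_iff]
      contrapose! hl
      simpa [Prod.ext_iff] using hl
    gcongr
    exact norm_finTwo_le_norm_latticePoint l

lemma ne_zero_of_one_le_snd {l : ℤ × ℤ} (hl : 1 ≤ l.2) : l ≠ 0 := by
  rintro rfl
  simp at hl

end SquareLattice

theorem key_quadratic_form_estimate_general :
    ∃ C : ℝ, 0 < C ∧ ∀ m : ℤ × ℤ,
      Summable (fun l : {l : ℤ × ℤ // l ≠ 0 ∧ l ≠ m} ↦
        ((l.1.1 : ℝ) * (m.2 : ℝ) - (l.1.2 : ℝ) * (m.1 : ℝ)) ^ 2 *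
          (1 / ((l.1.1 : ℝ) ^ 2 + (l.1.2 : ℝ) ^ 2)
            - 1 / (((m.1 : ℝ) - (l.1.1 : ℝ)) ^ 2 + ((m.2 : ℝ) - (l.1.2 : ℝ)) ^ 2)) ^ 2) ∧
      ∑' l : {l : ℤ × ℤ // l ≠ 0 ∧ l ≠ m},
        ((l.1.1 : ℝ) * (m.2 : ℝ) - (l.1.2 : ℝ) * (m.1 : ℝ)) ^ 2 *
          (1 / ((l.1.1 : ℝ) ^ 2 + (l.1.2 : ℝ) ^ 2)
            - 1 / (((m.1 : ℝ) - (l.1.1 : ℝ)) ^ 2 + ((m.2 : ℝ) - (l.1.2 : ℝ)) ^ 2)) ^ 2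
        ≤ C * ((m.1 : ℝ) ^ 2 + (m.2 : ℝ) ^ 2) ^ 2 := by
  have summable_inv : Summable fun l ↦ (‖latticePoint l‖ ^ 4)⁻¹ :=
    summable_inv_norm_latticePoint_pow (by norm_num)
  have tsum_inv_pos : 0 < ∑' l, (‖latticePoint l‖ ^ 4)⁻¹ :=
    summable_inv.tsum_pos (fun _ ↦ by positivity) (1, 0) (by simp [latticePoint, Complex.ext_iff])
  refine ⟨4 * ∑' l, (‖latticePoint l‖ ^ 4)⁻¹, by positivity, fun m ↦ ?_⟩
  simpa only [sqCoupling_latticePoint, ← sq_norm_latticePoint m, ← pow_mul] using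
    summable_and_tsum_sqCoupling_le latticePoint_injective summable_inv m

/-- **Key quadratic-form estimate** (from the proof of Lemma 3.1). There is a constant `C > 0`
such that for every `m = (m₁,m₂) ∈ Λ = ℤ×(ℕ∖{0})`,
`∑_{l=(j,k)∈Λ, l≠m} (j m₂ − k m₁)² (1/(j²+k²) − 1/((m₁−j)²+(m₂−k)²))² ≤ C (m₁²+m₂²)²`. -/
theorem key_quadratic_form_estimate :
    ∃ C : ℝ, 0 < C ∧ ∀ m : ℤ × ℤ, 1 ≤ m.2 →
      Summable (fun l : {l : ℤ × ℤ // 1 ≤ l.2 ∧ l ≠ m} =>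
        ((l.1.1 : ℝ) * (m.2 : ℝ) - (l.1.2 : ℝ) * (m.1 : ℝ))^2 *
          (1 / ((l.1.1 : ℝ)^2 + (l.1.2 : ℝ)^2)
            - 1 / (((m.1 : ℝ) - (l.1.1 : ℝ))^2 + ((m.2 : ℝ) - (l.1.2 : ℝ))^2))^2) ∧
      ∑' l : {l : ℤ × ℤ // 1 ≤ l.2 ∧ l ≠ m},
          ((l.1.1 : ℝ) * (m.2 : ℝ) - (l.1.2 : ℝ) * (m.1 : ℝ))^2 *
            (1 / ((l.1.1 : ℝ)^2 + (l.1.2 : ℝ)^2)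
              - 1 / (((m.1 : ℝ) - (l.1.1 : ℝ))^2 + ((m.2 : ℝ) - (l.1.2 : ℝ))^2))^2
        ≤ C * ((m.1 : ℝ)^2 + (m.2 : ℝ)^2)^2 := by
  obtain ⟨C, hC, bound⟩ := key_quadratic_form_estimate_general
  exact ⟨C, hC, fun m _ ↦ (summable_and_tsum_le_of_subtype_imp (p := fun l ↦ 1 ≤ l.2 ∧ l ≠ m)
    (fun _ ↦ And.imp_left ne_zero_of_one_le_snd) (fun _ ↦ by positivity) (bound m) :)⟩
end

section
/- Convergence of double Gaussian series (Proposition 3.3): Let I be a countable set and (g_l)_{l∈I} a family of independent centered real Gaussian random variables on a probability space (Ω,ℱ,P), with variances Var(g_l) = σ_l² ∈ (0,∞). Let H : I×I → ℝ be symmetric with ∑_{l,l'} H_{l,l'}² σ_l² σ_{l'}² < ∞, and let (Hⁿ)_{n∈ℕ} be symmetric functions I×I → ℝ such that: (i) ∑_{l,l'} |Hⁿ_{l,l'}| σ_l σ_{l'} < ∞ for each n (so that Xₙ := ∑_{l,l'} Hⁿ_{l,l'} g_l g_{l'} converges absolutely in L²(P)); (ii) ∑_{l} Hⁿ_{l,l}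 σ_l² → 0 as n → ∞; (iii) ∑_{l,l'} (Hⁿ_{l,l'} − H_{l,l'})² σ_l² σ_{l'}² → 0 as n → ∞. Then the sequence (Xₙ) converges in L²(P). Moreover the limit does not depend on the approximating sequence: if (Kⁿ) is another sequence satisfying (i)–(iii) for the same H, then lim Xₙ = lim ∑_{l,l'} Kⁿ_{l,l'} g_l g_{l'} in L²(P). -/
open MeasureTheory ProbabilityTheory Filter

open scoped ENNReal NNReal Topology InnerProductSpace

/-!
The limit is explicit: it is `∑ H_{l,l'} • ξ_{l,l'}` in `L²(P)`, where `ξ_{l,l'}` is the centered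
product `g_l g_{l'} - E[g_l g_{l'}]`. By independence `ξ_{l,l'}` is orthogonal to every `ξ_{m,m'}`
with `{m, m'} ≠ {l, l'}`, and `‖ξ_{l,l'}‖ ≤ ‖g_l‖₄ ‖g_{l'}‖₄ ≤ C σ_l σ_{l'}`, so
`‖∑ c_{l,l'} ξ_{l,l'}‖² ≤ 2 C² ∑ c_{l,l'}² σ_l² σ_{l'}²`. Hence `∑ Hⁿ ξ` converges to `∑ H ξ`, while
the absolutely convergent series `∑ Hⁿ g g` differs from `∑ Hⁿ ξ` by the constant `∑ Hⁿ_{l,l} σ_l²`,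
which tends to zero.
-/

section AlmostOrthogonal

variable {𝕜 ι E : Type*} [RCLike 𝕜] [NormedAddCommGroup E] [InnerProductSpace 𝕜 E]
  {k : ℕ} {x : ι → E}

variable (𝕜) in
/-- A family is `k`-almost orthogonal if each member is orthogonal to all but at most `k` members,
counted by index and including itself. This weakening of orthogonality still bounds `‖∑ x i‖ ^ 2`
by a multiple of `∑ ‖x i‖ ^ 2`. -/
def IsAlmostOrthogonal (k : ℕ) (x : ι → E) : Prop :=
  ∀ i, {j | ⟪x i, x j⟫_𝕜 ≠ 0}.encard ≤ k

namespace IsAlmostOrthogonal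

lemma smul (hx : IsAlmostOrthogonal 𝕜 k x) (c : ι → 𝕜) :
    IsAlmostOrthogonal 𝕜 k fun i ↦ c i • x i := by
  refine fun i ↦ (Set.encard_le_encard fun j hj ↦ ?_).trans (hx i)
  contrapose! hj
  simp_all [inner_smul_left, inner_smul_right]

lemma card_filter_inner_ne_zero_le [DecidableEq 𝕜] (hx : IsAlmostOrthogonal 𝕜 k x) (s : Finset ι)
    (i : ι) : (s.filter fun j ↦ ⟪x i, x j⟫_𝕜 ≠ 0).card ≤ k := by
  have hsub : (s.filter fun j ↦ ⟪x i, x j⟫_𝕜 ≠ 0 : Set ι) ⊆ {j | ⟪x i, x j⟫_𝕜 ≠ 0} := by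
    simp
  have := (Set.encard_le_encard hsub).trans (hx i)
  rwa [Set.encard_coe_eq_coe_finsetCard, Nat.cast_le] at this

/-- Schur's test: bound each non-vanishing `⟪x i, x j⟫` by `(‖x i‖ ^ 2 + ‖x j‖ ^ 2) / 2`. -/
lemma norm_sum_sq_le (hx : IsAlmostOrthogonal 𝕜 k x) (s : Finset ι) :
    ‖∑ i ∈ s, x i‖ ^ 2 ≤ k * ∑ i ∈ s, ‖x i‖ ^ 2 := by
  classical
  let r (i j : ι) : ℝ := if ⟪x i, x j⟫_𝕜 ≠ 0 then 1 else 0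
  have r_symm (i j : ι) : r i j = r j i := by simp only [r, ne_eq, inner_eq_zero_symm]
  have sum_r_le (i : ι) : ∑ j ∈ s, r i j ≤ k := by
    rw [Finset.sum_boole]
    exact_mod_cast hx.card_filter_inner_ne_zero_le s i
  have inner_le (i j : ι) :
      RCLike.re ⟪x i, x j⟫_𝕜 ≤ r i j * (‖x i‖ ^ 2 / 2) + r j i * (‖x j‖ ^ 2 / 2) := by
    rw [r_symm j i]
    by_cases h : ⟪x i, x j⟫_𝕜 = 0
    · simp [r, h]
    · have := re_inner_le_norm (𝕜 := 𝕜) (x i) (x j)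
      simp only [r, h, ne_eq, not_false_eq_true, if_true]
      linarith [two_mul_le_add_sq ‖x i‖ ‖x j‖]
  calc ‖∑ i ∈ s, x i‖ ^ 2 = ∑ i ∈ s, ∑ j ∈ s, RCLike.re ⟪x i, x j⟫_𝕜 := by
        rw [← inner_self_eq_norm_sq (𝕜 := 𝕜), sum_inner]
        simp only [inner_sum, map_sum]
    _ ≤ ∑ i ∈ s, ∑ j ∈ s, (r i j * (‖x i‖ ^ 2 / 2) + r j i * (‖x j‖ ^ 2 / 2)) := by
        gcongr; exact inner_le _ _
    _ = ∑ i ∈ s, (∑ j ∈ s, r i j) * ‖x i‖ ^ 2 := by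
        simp only [Finset.sum_add_distrib]
        rw [Finset.sum_comm (f := fun i j ↦ r j i * (‖x j‖ ^ 2 / 2)), ← Finset.sum_add_distrib]
        refine Finset.sum_congr rfl fun i _ ↦ ?_
        rw [← Finset.sum_mul]
        ring
    _ ≤ k * ∑ i ∈ s, ‖x i‖ ^ 2 := by
        rw [Finset.mul_sum]
        gcongr
        exact sum_r_le _

lemma summable [CompleteSpace E] (hx : IsAlmostOrthogonal 𝕜 k x)
    (hsq : Summable fun i ↦ ‖x i‖ ^ 2) : Summable x := by
  rw [summable_iff_vanishing_norm]
  intro ε hε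
  obtain ⟨s, hs⟩ := summable_iff_vanishing_norm.1 (hsq.mul_left (k : ℝ)) (ε ^ 2) (by positivity)
  refine ⟨s, fun t ht ↦ lt_of_pow_lt_pow_left₀ 2 hε.le ?_⟩
  calc ‖∑ i ∈ t, x i‖ ^ 2 ≤ ∑ i ∈ t, k * ‖x i‖ ^ 2 := by
        simpa only [Finset.mul_sum] using hx.norm_sum_sq_le t
    _ < ε ^ 2 := (le_abs_self _).trans_lt (hs t ht)

lemma norm_tsum_sq_le [CompleteSpace E] (hx : IsAlmostOrthogonal 𝕜 k x)
    (hsq : Summable fun i ↦ ‖x i‖ ^ 2) : ‖∑' i, x i‖ ^ 2 ≤ k * ∑' i, ‖x i‖ ^ 2 := by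
  have hlim : Tendsto (fun s : Finset ι ↦ ‖∑ i ∈ s, x i‖ ^ 2) atTop (𝓝 (‖∑' i, x i‖ ^ 2)) :=
    ((hx.summable hsq).hasSum.norm).pow 2
  refine le_of_tendsto' hlim fun s ↦ (hx.norm_sum_sq_le s).trans ?_
  gcongr
  exact hsq.sum_le_tsum s fun i _ ↦ by positivity

end IsAlmostOrthogonal

end AlmostOrthogonal

section WeightedSeries

variable {ι β E : Type*} {k : ℕ} {x : ι → E} {w : ι → ℝ} {C : ℝ}

lemma memℓp_two_iff_summable_sq {f : ι → ℝ} : Memℓp f 2 ↔ Summable fun i ↦ f i ^ 2 := by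
  rw [memℓp_gen_iff (by simp)]
  simp

lemma memℓp_two_of_summable {f : ι → ℝ} (hf : Summable f) : Memℓp f 2 := by
  have hf_one : Memℓp f 1 := memℓp_gen (by simpa using hf.abs)
  exact hf_one.of_exponent_ge one_le_two

lemma norm_smul_sq_le_of_norm_le [SeminormedAddCommGroup E] [NormedSpace ℝ E] {y : E} {t : ℝ}
    (hy : ‖y‖ ≤ C * t) (c : ℝ) : ‖c • y‖ ^ 2 ≤ C ^ 2 * (c * t) ^ 2 := by
  calc ‖c • y‖ ^ 2 = c ^ 2 * ‖y‖ ^ 2 := by rw [norm_smul, mul_pow, Real.norm_eq_abs, sq_abs]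
    _ ≤ c ^ 2 * (C * t) ^ 2 := by gcongr
    _ = C ^ 2 * (c * t) ^ 2 := by ring

lemma summable_norm_smul_sq_of_norm_le [SeminormedAddCommGroup E] [NormedSpace ℝ E]
    (hxw : ∀ i, ‖x i‖ ≤ C * w i) {a : ι → ℝ} (ha : Memℓp (fun i ↦ a i * w i) 2) :
    Summable fun i ↦ ‖a i • x i‖ ^ 2 :=
  .of_nonneg_of_le (fun _ ↦ by positivity) (fun i ↦ norm_smul_sq_le_of_norm_le (hxw i) (a i))
    ((memℓp_two_iff_summable_sq.1 ha).mul_left _)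

namespace IsAlmostOrthogonal

variable [NormedAddCommGroup E] [InnerProductSpace ℝ E] [CompleteSpace E]

lemma norm_tsum_smul_sq_le (hx : IsAlmostOrthogonal ℝ k x)
    (hxw : ∀ i, ‖x i‖ ≤ C * w i) {a : ι → ℝ} (ha : Memℓp (fun i ↦ a i * w i) 2) :
    ‖∑' i, a i • x i‖ ^ 2 ≤ k * C ^ 2 * ∑' i, (a i * w i) ^ 2 := by
  have hsq := summable_norm_smul_sq_of_norm_le hxw ha
  calc ‖∑' i, a i • x i‖ ^ 2 ≤ k * ∑' i, ‖a i • x i‖ ^ 2 := (hx.smul a).norm_tsum_sq_le hsq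
    _ ≤ k * ∑' i, C ^ 2 * (a i * w i) ^ 2 := by
        gcongr
        · exact (memℓp_two_iff_summable_sq.1 ha).mul_left _
        · exact norm_smul_sq_le_of_norm_le (hxw _) _
    _ = k * C ^ 2 * ∑' i, (a i * w i) ^ 2 := by rw [tsum_mul_left, mul_assoc]

lemma tendsto_tsum_smul (hx : IsAlmostOrthogonal ℝ k x)
    (hxw : ∀ i, ‖x i‖ ≤ C * w i) {F : Filter β} {a : ι → ℝ} {b : β → ι → ℝ}
    (ha : Memℓp (fun i ↦ a i * w i) 2) (hb : ∀ n, Memℓp (fun i ↦ b n i * w i) 2)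
    (hlim : Tendsto (fun n ↦ ∑' i, ((b n i - a i) * w i) ^ 2) F (𝓝 0)) :
    Tendsto (fun n ↦ ∑' i, b n i • x i) F (𝓝 (∑' i, a i • x i)) := by
  have hsub (n : β) : Memℓp (fun i ↦ (b n i - a i) * w i) 2 := by
    simp only [sub_mul]
    exact (hb n).sub ha
  have tsum_sub (n : β) : ∑' i, b n i • x i - ∑' i, a i • x i = ∑' i, (b n i - a i) • x i := by
    simp only [sub_smul]
    exact (((hx.smul (b n)).summable (summable_norm_smul_sq_of_norm_le hxw (hb n))).tsum_sub
      ((hx.smul a).summable (summable_norm_smul_sq_of_norm_le hxw ha))).symm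
  have hsq : Tendsto (fun n ↦ ‖∑' i, b n i • x i - ∑' i, a i • x i‖ ^ 2) F (𝓝 0) := by
    refine squeeze_zero (fun n ↦ by positivity) (fun n ↦ ?_)
      (by simpa using hlim.const_mul (k * C ^ 2))
    rw [tsum_sub]
    exact hx.norm_tsum_smul_sq_le hxw (hsub n)
  rw [tendsto_iff_norm_sub_tendsto_zero]
  simpa using hsq.sqrt

end IsAlmostOrthogonal

end WeightedSeries

section CenteredSeries

variable {Ω ι β : Type*} [MeasurableSpace Ω] {P : Measure Ω} {X Y : Ω → ℝ}

/-- The centered random variable `X - P[X]`, as an element of the Hilbert space `L²(P)`, where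
inner products become covariances. -/
noncomputable def centeredLp [IsFiniteMeasure P] (hX : MemLp X 2 P) : Lp ℝ 2 P :=
  (hX.sub (memLp_const P[X])).toLp

lemma coeFn_centeredLp [IsFiniteMeasure P] (hX : MemLp X 2 P) :
    centeredLp hX =ᵐ[P] fun ω ↦ X ω - P[X] :=
  MemLp.coeFn_toLp _

lemma inner_centeredLp [IsFiniteMeasure P] (hX : MemLp X 2 P) (hY : MemLp Y 2 P) :
    ⟪centeredLp hX, centeredLp hY⟫_ℝ = cov[X, Y; P] := by
  rw [L2.inner_def, covariance]
  refine integral_congr_ae ?_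
  filter_upwards [coeFn_centeredLp hX, coeFn_centeredLp hY] with ω hXω hYω
  simp [hXω, hYω, mul_comm]

variable [IsProbabilityMeasure P]

lemma norm_centeredLp_sq_add_integral_sq (hX : MemLp X 2 P) :
    ‖centeredLp hX‖ ^ 2 + P[X] ^ 2 = ‖hX.toLp X‖ ^ 2 := by
  have norm_toLp_sq : ‖hX.toLp X‖ ^ 2 = P[X ^ 2] := by
    rw [← real_inner_self_eq_norm_sq, L2.inner_def]
    refine integral_congr_ae ?_
    filter_upwards [hX.coeFn_toLp] with ω hω
    simp [hω, sq]
  rw [← real_inner_self_eq_norm_sq, inner_centeredLp, covariance_self hX.aemeasurable,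
    variance_eq_sub hX, norm_toLp_sq, sub_add_cancel]

lemma norm_centeredLp_le (hX : MemLp X 2 P) : ‖centeredLp hX‖ ≤ ‖hX.toLp X‖ :=
  le_of_sq_le_sq
    (by linarith [norm_centeredLp_sq_add_integral_sq hX, sq_nonneg P[X]]) (norm_nonneg _)

lemma abs_integral_le_norm_toLp (hX : MemLp X 2 P) : |P[X]| ≤ ‖hX.toLp X‖ :=
  abs_le_of_sq_le_sq
    (by linarith [norm_centeredLp_sq_add_integral_sq hX, sq_nonneg ‖centeredLp hX‖]) (norm_nonneg _)

variable {Y : ι → Ω → ℝ} (hY : ∀ j, MemLp (Y j) 2 P)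

lemma ae_tsum_mul_eq_tsum_smul_centeredLp_add [Countable ι] {a : ι → ℝ}
    (ha : Summable fun j ↦ |a j| * ‖(hY j).toLp (Y j)‖) :
    ∀ᵐ ω ∂P, ∑' j, a j * Y j ω = (∑' j, a j • centeredLp (hY j)) ω + ∑' j, a j * P[Y j] := by
  have summable_norm : Summable fun j ↦ ‖a j • centeredLp (hY j)‖ := by
    refine .of_nonneg_of_le (fun _ ↦ norm_nonneg _) (fun j ↦ ?_) ha
    rw [norm_smul, Real.norm_eq_abs]
    gcongr
    exact norm_centeredLp_le (hY j)
  have summable_mean : Summable fun j ↦ a j * P[Y j] := by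
    refine .of_norm_bounded ha fun j ↦ ?_
    rw [norm_mul, Real.norm_eq_abs, Real.norm_eq_abs]
    gcongr
    exact abs_integral_le_norm_toLp (hY j)
  have coeFn_smul : ∀ᵐ ω ∂P, ∀ j, (a j • centeredLp (hY j)) ω = a j * (Y j ω - P[Y j]) := by
    refine ae_all_iff.2 fun j ↦ ?_
    filter_upwards [Lp.coeFn_smul (a j) (centeredLp (hY j)), coeFn_centeredLp (hY j)] with ω h₁ h₂
    rw [h₁, Pi.smul_apply, h₂, smul_eq_mul]
  filter_upwards [Lp.hasSum_coeFn_tsum (tsum_enorm_ne_top_iff_summable_norm.2 summable_norm),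
    coeFn_smul] with ω hω coeFn_smul
  simp only [coeFn_smul] at hω
  rw [← (hω.add summable_mean.hasSum).tsum_eq]
  refine tsum_congr fun j ↦ ?_
  ring

lemma eLpNorm_tsum_mul_sub_le [Countable ι] {a : ι → ℝ}
    (ha : Summable fun j ↦ |a j| * ‖(hY j).toLp (Y j)‖) (Z : Lp ℝ 2 P) :
    eLpNorm (fun ω ↦ ∑' j, a j * Y j ω - Z ω) 2 P
      ≤ ‖∑' j, a j • centeredLp (hY j) - Z‖ₑ + ‖∑' j, a j * P[Y j]‖ₑ := by
  set S := ∑' j, a j • centeredLp (hY j)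
  set m := ∑' j, a j * P[Y j]
  calc eLpNorm (fun ω ↦ ∑' j, a j * Y j ω - Z ω) 2 P
      = eLpNorm (⇑(S - Z) + fun _ ↦ m) 2 P := by
        refine eLpNorm_congr_ae ?_
        filter_upwards [ae_tsum_mul_eq_tsum_smul_centeredLp_add hY ha, Lp.coeFn_sub S Z]
          with ω hseries hsub
        rw [hseries, Pi.add_apply, hsub, Pi.sub_apply]
        ring
    _ ≤ eLpNorm (S - Z) 2 P + eLpNorm (fun _ ↦ m) 2 P :=
        eLpNorm_add_le (Lp.aestronglyMeasurable _) aestronglyMeasurable_const one_le_two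
    _ = ‖S - Z‖ₑ + ‖m‖ₑ := by
        rw [Lp.enorm_def, eLpNorm_const _ two_ne_zero (NeZero.ne P)]
        simp

theorem tendsto_eLpNorm_tsum_mul_sub_tsum_smul_centeredLp [Countable ι] {k : ℕ} {C : ℝ} {w : ι → ℝ}
    (hcov : ∀ i, {j | cov[Y i, Y j; P] ≠ 0}.encard ≤ k)
    (hYw : ∀ j, ‖(hY j).toLp (Y j)‖ ≤ C * w j)
    {F : Filter β} {a : ι → ℝ} {b : β → ι → ℝ} (ha : Memℓp (fun j ↦ a j * w j) 2)
    (hb : ∀ n, Summable fun j ↦ |b n j| * w j)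
    (hmean : Tendsto (fun n ↦ ∑' j, b n j * P[Y j]) F (𝓝 0))
    (hlim : Tendsto (fun n ↦ ∑' j, ((b n j - a j) * w j) ^ 2) F (𝓝 0)) :
    Tendsto (fun n ↦ eLpNorm
      (fun ω ↦ ∑' j, b n j * Y j ω - (∑' j, a j • centeredLp (hY j)) ω) 2 P) F (𝓝 0) := by
  have hortho : IsAlmostOrthogonal ℝ k fun j ↦ centeredLp (hY j) := by
    simpa only [IsAlmostOrthogonal, inner_centeredLp] using hcov
  have hb_sq (n : β) : Memℓp (fun j ↦ b n j * w j) 2 :=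
    memℓp_two_of_summable <| .of_abs <| by simpa only [abs_mul, abs_abs] using (hb n).abs
  have hb_norm (n : β) : Summable fun j ↦ |b n j| * ‖(hY j).toLp (Y j)‖ := by
    refine .of_nonneg_of_le (fun _ ↦ by positivity) (fun j ↦ ?_) ((hb n).mul_left C)
    rw [mul_left_comm]
    gcongr
    exact hYw j
  have hcentered := hortho.tendsto_tsum_smul
    (fun j ↦ (norm_centeredLp_le (hY j)).trans (hYw j)) ha hb_sq hlim
  have hbound : Tendsto
      (fun n ↦ ‖∑' j, b n j • centeredLp (hY j) - ∑' j, a j • centeredLp (hY j)‖ₑ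
        + ‖∑' j, b n j * P[Y j]‖ₑ) F (𝓝 0) := by
    simpa using (hcentered.sub_const (∑' j, a j • centeredLp (hY j))).enorm.add hmean.enorm
  exact tendsto_of_tendsto_of_tendsto_of_le_of_le tendsto_const_nhds hbound (fun _ ↦ zero_le)
    fun n ↦ eLpNorm_tsum_mul_sub_le hY (hb_norm n) _

end CenteredSeries

section IndependentProducts

instance holderTriple_four_four_two : ENNReal.HolderTriple 4 4 2 where
  inv_add_inv_eq_inv := by
    rw [← ENNReal.toReal_eq_toReal_iff' (by simp) (by simp)]
    norm_num [ENNReal.toReal_add]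

variable {I Ω : Type*} [MeasurableSpace Ω] {P : Measure Ω} {g : I → Ω → ℝ}

lemma norm_toLp_mul_le {p q r : ℝ≥0∞} [ENNReal.HolderTriple p q r] {X Y : Ω → ℝ}
    (hX : MemLp X p P) (hY : MemLp Y q P) (hXY : MemLp (X * Y) r P) :
    ‖hXY.toLp (X * Y)‖ ≤ (eLpNorm X p P).toReal * (eLpNorm Y q P).toReal := by
  have holder : eLpNorm (X * Y) r P ≤ eLpNorm X p P * eLpNorm Y q P :=
    eLpNorm_smul_le_mul_eLpNorm (f := Y) (φ := X) hY.1 hX.1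
  rw [Lp.norm_toLp, ← ENNReal.toReal_mul]
  exact ENNReal.toReal_mono (ENNReal.mul_ne_top hX.2.ne hY.2.ne) holder

lemma integral_mul_eq_zero_of_indepFun {X Y : Ω → ℝ} (hX : AEStronglyMeasurable X P)
    (hY : AEStronglyMeasurable Y P) (hindep : IndepFun X Y P) (hmean : P[X] = 0) :
    P[X * Y] = 0 := by
  rw [hindep.integral_mul_eq_mul_integral hX hY, hmean, zero_mul]

lemma tsum_mul_integral_mul_eq_tsum_diag (hg : ∀ l, AEStronglyMeasurable (g l) P)
    (hindep : iIndepFun g P) (hmean : ∀ l, P[g l] = 0) (a : I → I → ℝ) :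
    ∑' p : I × I, a p.1 p.2 * P[g p.1 * g p.2] = ∑' l, a l l * P[g l ^ 2] := by
  have diag_injective : Function.Injective fun l : I ↦ (l, l) := fun _ _ h ↦ congrArg Prod.fst h
  have support_subset :
      Function.support (fun p : I × I ↦ a p.1 p.2 * P[g p.1 * g p.2])
        ⊆ Set.range fun l ↦ (l, l) := by
    rintro ⟨l, l'⟩ hp
    obtain rfl | hll' := eq_or_ne l l'
    · exact ⟨l, rfl⟩
    · exact absurd (mul_eq_zero_of_right _ <| integral_mul_eq_zero_of_indepFun (hg l) (hg l')
        (hindep.indepFun hll') (hmean l)) hp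
  simp only [← diag_injective.tsum_eq support_subset, sq]

lemma indepFun_mul_mul_of_ne (hg : ∀ l, AEMeasurable (g l) P) (hindep : iIndepFun g P)
    {a b c d : I} (hab : a ≠ b) (hac : a ≠ c) (had : a ≠ d) :
    IndepFun (g a) (g b * (g c * g d)) P := by
  classical
  have h := hindep.indepFun_finset₀ {a} {b, c, d} (by simp [hab, hac, had]) hg
  have hφ : Measurable fun x : ({a} : Finset I) → ℝ ↦ x ⟨a, by simp⟩ := by fun_prop
  have hψ : Measurable fun x : ({b, c, d} : Finset I) → ℝ ↦
      x ⟨b, by simp⟩ * (x ⟨c, by simp⟩ * x ⟨d, by simp⟩) := by fun_prop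
  exact h.comp hφ hψ

variable [IsProbabilityMeasure P]

lemma covariance_mul_mul_eq_zero_of_ne (hg : ∀ l, MemLp (g l) 4 P) (hindep : iIndepFun g P)
    {a b c d : I} (hmean : P[g a] = 0) (hab : a ≠ b) (hac : a ≠ c) (had : a ≠ d) :
    cov[g a * g b, g c * g d; P] = 0 := by
  have hmeas (l : I) := (hg l).1
  have hindep_triple : IndepFun (g a) (g b * (g c * g d)) P :=
    indepFun_mul_mul_of_ne (fun l ↦ (hmeas l).aemeasurable) hindep hab hac had
  rw [covariance_eq_sub ((hg b).mul (hg a)) ((hg d).mul (hg c)), mul_assoc,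
    integral_mul_eq_zero_of_indepFun (hmeas a) ((hmeas b).mul ((hmeas c).mul (hmeas d)))
      hindep_triple hmean,
    integral_mul_eq_zero_of_indepFun (hmeas a) (hmeas b) (hindep.indepFun hab) hmean,
    zero_mul, sub_zero]

lemma covariance_mul_mul_eq_zero_of_sym2_ne (hg : ∀ l, MemLp (g l) 4 P) (hindep : iIndepFun g P)
    (hmean : ∀ l, P[g l] = 0) {a b c d : I} (h : s(a, b) ≠ s(c, d)) :
    cov[g a * g b, g c * g d; P] = 0 := by
  have cases_of_ne : (a = b ∧ c = d ∧ a ≠ c) ∨ (a ≠ b ∧ a ≠ c ∧ a ≠ d) ∨ (b ≠ a ∧ b ≠ c ∧ b ≠ d) ∨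
      (c ≠ d ∧ c ≠ a ∧ c ≠ b) ∨ (d ≠ c ∧ d ≠ a ∧ d ≠ b) := by
    rw [Ne, Sym2.eq_iff] at h
    grind
  obtain ⟨rfl, rfl, hac⟩ | ⟨hab, hac, had⟩ | ⟨hba, hbc, hbd⟩ | ⟨hcd, hca, hcb⟩ | ⟨hdc, hda, hdb⟩ :=
    cases_of_ne
  · exact (hindep.indepFun_mul_mul₀ (fun l ↦ (hg l).1.aemeasurable) a a c c hac hac hac hac
      ).covariance_eq_zero ((hg a).mul (hg a)) ((hg c).mul (hg c))
  · exact covariance_mul_mul_eq_zero_of_ne hg hindep (hmean _) hab hac had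
  · rw [mul_comm (g a)]
    exact covariance_mul_mul_eq_zero_of_ne hg hindep (hmean _) hba hbc hbd
  · rw [covariance_comm]
    exact covariance_mul_mul_eq_zero_of_ne hg hindep (hmean _) hcd hca hcb
  · rw [covariance_comm, mul_comm (g c)]
    exact covariance_mul_mul_eq_zero_of_ne hg hindep (hmean _) hdc hda hdb

lemma encard_covariance_mul_mul_ne_zero_le_two (hg : ∀ l, MemLp (g l) 4 P)
    (hindep : iIndepFun g P) (hmean : ∀ l, P[g l] = 0) (p : I × I) :
    {q : I × I | cov[g p.1 * g p.2, g q.1 * g q.2; P] ≠ 0}.encard ≤ 2 := by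
  have hsub : {q : I × I | cov[g p.1 * g p.2, g q.1 * g q.2; P] ≠ 0} ⊆ {p, p.swap} := by
    intro q hq
    have hpq : s(p.1, p.2) = s(q.1, q.2) := by
      contrapose! hq
      simpa using covariance_mul_mul_eq_zero_of_sym2_ne hg hindep hmean hq
    rw [eq_comm, Sym2.mk_eq_mk_iff] at hpq
    exact hpq
  calc _ ≤ ({p, p.swap} : Set (I × I)).encard := Set.encard_le_encard hsub
    _ ≤ 2 := by simpa [one_add_one_eq_two] using Set.encard_insert_le {p.swap} p

end IndependentProducts

section Gaussian

lemma eLpNorm_id_gaussianReal_zero (p : ℝ≥0∞) (v : ℝ≥0) :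
    eLpNorm id p (gaussianReal 0 v) = ENNReal.ofReal √v * eLpNorm id p (gaussianReal 0 1) := by
  have hscale : (gaussianReal 0 1).map (√v * ·) = gaussianReal 0 v := by
    rw [gaussianReal_map_const_mul]
    congr 1
    · simp
    · ext; simp
  have id_comp : id ∘ (√v * ·) = √(v : ℝ) • (id : ℝ → ℝ) := rfl
  rw [← hscale, eLpNorm_map_measure aestronglyMeasurable_id (by fun_prop), id_comp,
    eLpNorm_const_smul, Real.enorm_eq_ofReal (by positivity)]

variable {Ω : Type*} [MeasurableSpace Ω] {P : Measure Ω} {X : Ω → ℝ} {v : ℝ≥0}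

lemma toReal_eLpNorm_of_hasLaw_gaussianReal_zero (hX : HasLaw X (gaussianReal 0 v) P) (p : ℝ≥0∞) :
    (eLpNorm X p P).toReal = (eLpNorm id p (gaussianReal 0 1)).toReal * √v := by
  have hmap : eLpNorm X p P = eLpNorm id p (gaussianReal 0 v) := by
    rw [← hX.map_eq, eLpNorm_map_measure aestronglyMeasurable_id hX.aemeasurable, Function.id_comp]
  rw [hmap, eLpNorm_id_gaussianReal_zero, ENNReal.toReal_mul,
    ENNReal.toReal_ofReal (by positivity), mul_comm]

lemma integral_of_hasLaw_gaussianReal {m : ℝ} (hX : HasLaw X (gaussianReal m v) P) : P[X] = m :=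
  hX.integral_eq.trans integral_id_gaussianReal

lemma integral_sq_of_hasLaw_gaussianReal_zero (hX : HasLaw X (gaussianReal 0 v) P) :
    P[X ^ 2] = (v : ℝ) := by
  simpa using! (variance_of_integral_eq_zero hX.aemeasurable
    (integral_of_hasLaw_gaussianReal hX)).symm.trans (hX.variance_eq.trans variance_id_gaussianReal)

end Gaussian

theorem double_gaussian_series_L2_convergence_general
    {I : Type*} [Countable I] {Ω : Type*} [MeasurableSpace Ω]
    {P : Measure Ω} [IsProbabilityMeasure P] {g : I → Ω → ℝ} {v : I → ℝ≥0} {C : ℝ}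
    (hg : ∀ l, MemLp (g l) 4 P) (hindep : iIndepFun g P)
    (hmean : ∀ l, P[g l] = 0) (hvar : ∀ l, P[g l ^ 2] = (v l : ℝ))
    (hfour : ∀ l, (eLpNorm (g l) 4 P).toReal ≤ C * √(v l))
    (H : I → I → ℝ) (hH : Summable fun p : I × I ↦ H p.1 p.2 ^ 2 * (v p.1 : ℝ) * (v p.2 : ℝ)) :
    ∃ X : Ω → ℝ, MemLp X 2 P ∧ ∀ {β : Type*} {F : Filter β} (K : β → I → I → ℝ),
      (∀ n, Summable fun p : I × I ↦ |K n p.1 p.2| * √(v p.1) * √(v p.2)) →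
      Tendsto (fun n ↦ ∑' l, K n l l * (v l : ℝ)) F (𝓝 0) →
      Tendsto (fun n ↦ ∑' p : I × I, (K n p.1 p.2 - H p.1 p.2) ^ 2 * (v p.1 : ℝ) * (v p.2 : ℝ))
        F (𝓝 0) →
      Tendsto (fun n ↦ eLpNorm (fun ω ↦
        (∑' p : I × I, K n p.1 p.2 * g p.1 ω * g p.2 ω) - X ω) 2 P) F (𝓝 0) := by
  have hprod (p : I × I) : MemLp (g p.1 * g p.2) 2 P := (hg p.2).mul (hg p.1)
  have hnorm (p : I × I) : ‖(hprod p).toLp‖ ≤ C ^ 2 * (√(v p.1) * √(v p.2)) :=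
    calc ‖(hprod p).toLp‖ ≤ (eLpNorm (g p.1) 4 P).toReal * (eLpNorm (g p.2) 4 P).toReal :=
          norm_toLp_mul_le (hg p.1) (hg p.2) (hprod p)
      _ ≤ (C * √(v p.1)) * (C * √(v p.2)) :=
          mul_le_mul (hfour p.1) (hfour p.2) (by positivity)
            (ENNReal.toReal_nonneg.trans (hfour p.1))
      _ = C ^ 2 * (√(v p.1) * √(v p.2)) := by ring
  have weight_sq (a : ℝ) (p : I × I) :
      (a * (√(v p.1) * √(v p.2))) ^ 2 = a ^ 2 * (v p.1 : ℝ) * (v p.2 : ℝ) := by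
    simp only [mul_pow, Real.sq_sqrt (NNReal.coe_nonneg _), mul_assoc]
  refine ⟨⇑(∑' p : I × I, H p.1 p.2 • centeredLp (hprod p)), Lp.memLp _, ?_⟩
  intro β F K hKabs hKdiag hKapprox
  have hlim := tendsto_eLpNorm_tsum_mul_sub_tsum_smul_centeredLp hprod
    (encard_covariance_mul_mul_ne_zero_le_two hg hindep hmean) hnorm
    (F := F) (a := fun p ↦ H p.1 p.2) (b := fun n p ↦ K n p.1 p.2)
    (memℓp_two_iff_summable_sq.2 <| by simpa only [weight_sq] using hH)
    (by simpa only [mul_assoc] using hKabs)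
    (by simpa only [tsum_mul_integral_mul_eq_tsum_diag (fun l ↦ (hg l).1) hindep hmean, hvar]
      using hKdiag)
    (by simpa only [weight_sq] using hKapprox)
  simpa only [mul_assoc, Pi.mul_apply] using hlim

/-- **Proposition 3.3 (convergence of double Gaussian series).** Let `(g_l)_{l∈I}` be a
countable family of independent centered real Gaussian random variables with variances
`σ_l² = v l ∈ (0,∞)`. Let `H` be symmetric with `∑_{l,l'} H_{l,l'}² σ_l² σ_{l'}² < ∞` and let
`(Hⁿ)` be symmetric kernels with (i) `∑_{l,l'} |Hⁿ_{l,l'}| σ_l σ_{l'} < ∞`,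
(ii) `∑_l Hⁿ_{l,l} σ_l² → 0` and (iii) `∑_{l,l'} (Hⁿ_{l,l'} − H_{l,l'})² σ_l² σ_{l'}² → 0`.
Then `Xₙ = ∑_{l,l'} Hⁿ_{l,l'} g_l g_{l'}` converges in `L²(P)`, and the limit is the same for
any other approximating sequence `(Kⁿ)` satisfying (i)–(iii). -/
theorem double_gaussian_series_L2_convergence
    {I : Type*} [Countable I] {Ω : Type*} [MeasurableSpace Ω]
    (P : Measure Ω) [IsProbabilityMeasure P]
    (g : I → Ω → ℝ) (v : I → NNReal)
    (hmeas : ∀ l, Measurable (g l))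
    (hv : ∀ l, 0 < v l)
    (hlaw : ∀ l, P.map (g l) = gaussianReal 0 (v l))
    (hindep : iIndepFun g P)
    (H : I → I → ℝ) (hsymm : ∀ l l', H l l' = H l' l)
    (hH : Summable fun p : I × I => (H p.1 p.2)^2 * (v p.1 : ℝ) * (v p.2 : ℝ))
    (Hn : ℕ → I → I → ℝ) (hHnsymm : ∀ n l l', Hn n l l' = Hn n l' l)
    (hHnabs : ∀ n, Summable fun p : I × I =>
      |Hn n p.1 p.2| * Real.sqrt (v p.1) * Real.sqrt (v p.2))
    (hHndiag : Tendsto (fun n => ∑' l, Hn n l l * (v l : ℝ)) atTop (nhds 0))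
    (hHnapprox : Tendsto
      (fun n => ∑' p : I × I, (Hn n p.1 p.2 - H p.1 p.2)^2 * (v p.1 : ℝ) * (v p.2 : ℝ))
      atTop (nhds 0)) :
    ∃ X : Ω → ℝ, MemLp X 2 P ∧
      Tendsto (fun n => eLpNorm
          (fun ω => (∑' p : I × I, Hn n p.1 p.2 * g p.1 ω * g p.2 ω) - X ω) 2 P)
        atTop (nhds 0) ∧
      ∀ Kn : ℕ → I → I → ℝ, (∀ n l l', Kn n l l' = Kn n l' l) →
        (∀ n, Summable fun p : I × I =>
          |Kn n p.1 p.2| * Real.sqrt (v p.1) * Real.sqrt (v p.2)) →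
        Tendsto (fun n => ∑' l, Kn n l l * (v l : ℝ)) atTop (nhds 0) →
        Tendsto
          (fun n => ∑' p : I × I, (Kn n p.1 p.2 - H p.1 p.2)^2 * (v p.1 : ℝ) * (v p.2 : ℝ))
          atTop (nhds 0) →
        Tendsto (fun n => eLpNorm
            (fun ω => (∑' p : I × I, Kn n p.1 p.2 * g p.1 ω * g p.2 ω) - X ω) 2 P)
          atTop (nhds 0) := by
  have hgauss (l : I) : HasLaw (g l) (gaussianReal 0 (v l)) P := ⟨(hmeas l).aemeasurable, hlaw l⟩
  obtain ⟨X, hX, hconv⟩ := double_gaussian_series_L2_convergence_general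
    (fun l ↦ (hgauss l).hasGaussianLaw.memLp (by simp)) hindep
    (fun l ↦ integral_of_hasLaw_gaussianReal (hgauss l))
    (fun l ↦ integral_sq_of_hasLaw_gaussianReal_zero (hgauss l))
    (fun l ↦ (toReal_eLpNorm_of_hasLaw_gaussianReal_zero (hgauss l) 4).le) H hH
  exact ⟨X, hX, hconv Hn hHnabs hHndiag hHnapprox, fun Kn _ ↦ hconv Kn⟩
end

section
/- Renormalized limit identity (relation between ⋄ and ⊗): Let I be a countable set, (g_l)_{l∈I} independent centered real Gaussian random variables with variances σ_l² ∈ (0,∞), and let (d_n)_{n≥1} be an injective sequence in I. Let H : I×I → ℝ be symmetric with ∑_{l,l'} |H_{l,l'}| σ_l σ_{l'} < ∞, and set S := ∑_{l} H_{l,l} σ_l² (absolutely convergent). Define Hⁿ : I×I → ℝ by Hⁿ_{l,l'} := H_{l,l'} − (S/(n σ_{d_k}²)) if l = l' = d_k for some 1 ≤ k ≤ n, and Hⁿ_{l,l'} := H_{l,l'} otherwise. Then: (a) ∑_{l} Hⁿ_{l,l} σ_l² = 0 for every n; (b) ∑_{l,l'} (Hⁿ_{l,l'} − H_{l,l'})²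 σ_l² σ_{l'}² = S²/n → 0; (c) the random variables Xₙ := ∑_{l,l'} Hⁿ_{l,l'} g_l g_{l'} (absolutely convergent in L²(P)) converge in L²(P) to ∑_{l,l'} H_{l,l'} g_l g_{l'} − S. -/
open MeasureTheory ProbabilityTheory Filter

/-!
The correction `H - Hⁿ` is supported on the `n` diagonal points `(d k, d k)`, so every sum in which
it enters is finite. Tested against `σ_l²` it gives `S`, which is (a); its weighted squares add up
to `n · (S / n)²`, which is (b); and tested against `g_l g_{l'}` it gives `S` times the average of
`g_{d 1}² / σ_{d 1}², …, g_{d n}² / σ_{d n}²`. These normalized squares have mean `1`, bounded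
variance and vanishing covariances, so by the weak law of large numbers their average tends to `1`
in `L²`, and the correction tends to `S`.
-/

section DiagonalCorrection

lemma hasSum_sum_of_injective {κ ι M : Type*} [AddCommMonoid M] [TopologicalSpace M] {d : κ → ι}
    (hd : Function.Injective d) {s : Finset κ} {f : ι → M}
    (hf : ∀ i, (∀ k ∈ s, d k ≠ i) → f i = 0) : HasSum f (∑ k ∈ s, f (d k)) := by
  have hsum : HasSum f (∑ i ∈ s.map ⟨d, hd⟩, f i) :=
    hasSum_sum_of_ne_finset_zero fun i hi ↦ hf i fun k hk hki ↦
      hi (Finset.mem_map.2 ⟨k, hk, hki⟩)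
  simpa only [Finset.sum_map, Function.Embedding.coeFn_mk] using hsum

variable {I : Type*} [DecidableEq I]

/-- The kernel `H - Hⁿ` that is subtracted from `H` to cancel its trace `S`: the trace is spread
evenly over the `n` diagonal points `(d k, d k)`, `1 ≤ k ≤ n`, relative to the variances `v`. -/
noncomputable def diagonalCorrection (v : I → ℝ) (d : ℕ → I) (S : ℝ) (n : ℕ) (l l' : I) : ℝ :=
  if l = l' ∧ ∃ k ∈ Finset.Icc 1 n, d k = l then S / (n * v l) else 0

variable {v : I → ℝ} {d : ℕ → I} {S : ℝ} {n : ℕ}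

lemma diagonalCorrection_apply_of_mem {k : ℕ} (hk : k ∈ Finset.Icc 1 n) :
    diagonalCorrection v d S n (d k) (d k) = S / (n * v (d k)) :=
  if_pos ⟨rfl, k, hk, rfl⟩

lemma diagonalCorrection_eq_zero {l l' : I} (h : ∀ k ∈ Finset.Icc 1 n, (d k, d k) ≠ (l, l')) :
    diagonalCorrection v d S n l l' = 0 :=
  if_neg fun ⟨hll', k, hk, hkl⟩ ↦ h k hk (Prod.ext hkl (hkl.trans hll'))

lemma hasSum_prod_of_diagonalCorrection_eq_zero (hd : Function.Injective d) {f : I × I → ℝ}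
    (hf : ∀ p : I × I, diagonalCorrection v d S n p.1 p.2 = 0 → f p = 0) :
    HasSum f (∑ k ∈ Finset.Icc 1 n, f (d k, d k)) :=
  hasSum_sum_of_injective (d := fun k ↦ (d k, d k)) (fun _ _ h ↦ hd (congrArg Prod.fst h))
    fun p hp ↦ hf p (diagonalCorrection_eq_zero hp)

lemma hasSum_diagonalCorrection_trace (hd : Function.Injective d) (hv : ∀ l, v l ≠ 0)
    (hn : n ≠ 0) : HasSum (fun l ↦ diagonalCorrection v d S n l l * v l) S := by
  have hsum := hasSum_sum_of_injective hd (s := Finset.Icc 1 n)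
    (f := fun l ↦ diagonalCorrection v d S n l l * v l) fun l hl ↦ mul_eq_zero_of_left
      (diagonalCorrection_eq_zero fun k hk h ↦ hl k hk (congrArg Prod.fst h)) _
  have hterm : ∀ k ∈ Finset.Icc 1 n,
      diagonalCorrection v d S n (d k) (d k) * v (d k) = S / n := fun k hk ↦ by
    rw [diagonalCorrection_apply_of_mem hk]
    field [hv (d k)]
  convert hsum
  rw [Finset.sum_congr rfl hterm, Finset.sum_const, Nat.card_Icc, nsmul_eq_mul]
  simp only [Nat.add_sub_cancel]
  field

lemma hasSum_diagonalCorrection_sq (hd : Function.Injective d) (hv : ∀ l, v l ≠ 0) (hn : n ≠ 0) :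
    HasSum (fun p : I × I ↦ diagonalCorrection v d S n p.1 p.2 ^ 2 * v p.1 * v p.2)
      (S ^ 2 / n) := by
  have hsum := hasSum_prod_of_diagonalCorrection_eq_zero hd (v := v) (S := S) (n := n)
    (f := fun p ↦ diagonalCorrection v d S n p.1 p.2 ^ 2 * v p.1 * v p.2) fun p hp ↦ by simp [hp]
  have hterm : ∀ k ∈ Finset.Icc 1 n,
      diagonalCorrection v d S n (d k) (d k) ^ 2 * v (d k) * v (d k) = S ^ 2 / n ^ 2 :=
    fun k hk ↦ by
      rw [diagonalCorrection_apply_of_mem hk]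
      field [hv (d k)]
  convert hsum
  rw [Finset.sum_congr rfl hterm, Finset.sum_const, Nat.card_Icc, nsmul_eq_mul]
  simp only [Nat.add_sub_cancel]
  field

lemma hasSum_diagonalCorrection_quadratic (hd : Function.Injective d) (x : I → ℝ) :
    HasSum (fun p : I × I ↦ diagonalCorrection v d S n p.1 p.2 * x p.1 * x p.2)
      (S * ((n : ℝ)⁻¹ * ∑ k ∈ Finset.Icc 1 n, x (d k) ^ 2 / v (d k))) := by
  have hsum := hasSum_prod_of_diagonalCorrection_eq_zero hd (v := v) (S := S) (n := n)
    (f := fun p ↦ diagonalCorrection v d S n p.1 p.2 * x p.1 * x p.2) fun p hp ↦ by simp [hp]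
  convert hsum
  rw [Finset.mul_sum, Finset.mul_sum]
  refine Finset.sum_congr rfl fun k hk ↦ ?_
  rw [diagonalCorrection_apply_of_mem hk]
  ring

end DiagonalCorrection

lemma summable_diagonal_of_summable_sqrt {I : Type*} {v : I → ℝ} (hv : ∀ l, 0 ≤ v l)
    {H : I → I → ℝ} (hH : Summable fun p : I × I ↦ |H p.1 p.2| * √(v p.1) * √(v p.2)) :
    Summable fun l ↦ H l l * v l := by
  refine .of_norm ((hH.comp_injective (i := fun l ↦ (l, l))
    fun _ _ h ↦ congrArg Prod.fst h).congr fun l ↦ ?_)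
  simp only [Function.comp_apply, norm_mul, Real.norm_eq_abs, mul_assoc,
    Real.mul_self_sqrt (hv l), abs_of_nonneg (hv l)]

section Probability

variable {Ω : Type*} [MeasurableSpace Ω] {P : Measure Ω}

lemma eLpNorm_two_eq_ofReal_sqrt_integral_sq {f : Ω → ℝ} (hf : MemLp f 2 P) :
    eLpNorm f 2 P = ENNReal.ofReal √(∫ ω, f ω ^ 2 ∂P) := by
  rw [hf.eLpNorm_eq_integral_rpow_norm two_ne_zero ENNReal.ofNat_ne_top, Real.sqrt_eq_rpow]
  simp

lemma eLpNorm_mul_le_mul_sqrt_integral_sq {f g : Ω → ℝ} (hf : MemLp f 2 P) (hg : MemLp g 2 P) :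
    eLpNorm (f * g) 1 P ≤
      ENNReal.ofReal (√(∫ ω, f ω ^ 2 ∂P) * √(∫ ω, g ω ^ 2 ∂P)) := by
  rw [ENNReal.ofReal_mul (Real.sqrt_nonneg _), ← eLpNorm_two_eq_ofReal_sqrt_integral_sq hf,
    ← eLpNorm_two_eq_ofReal_sqrt_integral_sq hg]
  have hholder := eLpNorm_smul_le_mul_eLpNorm (p := 2) (q := 2) (r := 1) hg.1 hf.1
  simpa only [smul_eq_mul] using hholder

lemma ae_summable_mul_of_summable_of_eLpNorm_le {ι : Type*} {a b : ι → ℝ} {X : ι → Ω → ℝ}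
    (hb : ∀ i, 0 < b i) (hX : ∀ i, AEStronglyMeasurable (X i) P)
    (hXb : ∀ i, eLpNorm (X i) 1 P ≤ ENNReal.ofReal (b i)) (hab : Summable fun i ↦ |a i| * b i) :
    ∀ᵐ ω ∂P, Summable fun i ↦ a i * X i ω := by
  have hcountable : (Function.support a).Countable :=
    hab.countable_support.mono fun i hi ↦ mul_ne_zero (abs_ne_zero.2 hi) (hb i).ne'
  have := hcountable.to_subtype
  have hnorm : ∀ i, eLpNorm (fun ω ↦ a i * X i ω) 1 P ≤ ENNReal.ofReal (|a i| * b i) := fun i ↦ by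
    rw [ENNReal.ofReal_mul (abs_nonneg _), ← Real.enorm_eq_ofReal_abs]
    exact (eLpNorm_const_smul_le (c := a i)).trans (by gcongr; exact hXb i)
  have hsupport : ∀ᵐ ω ∂P, Summable fun i : Function.support a ↦ ‖a i * X i ω‖ :=
    summable_norm_of_tsum_eLpNorm_ne_top le_rfl (fun i ↦ (hX i).const_mul _)
      (ne_top_of_le_ne_top (hab.subtype _).tsum_ofReal_ne_top (ENNReal.tsum_le_tsum (hnorm ·)))
  filter_upwards [hsupport] with ω hω
  refine (Subtype.val_injective.summable_iff fun i hi ↦ ?_).1 hω.of_norm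
  rw [Subtype.range_coe, Function.notMem_support] at hi
  rw [hi, zero_mul]

lemma ae_summable_quadratic {I : Type*} {g : I → Ω → ℝ} {v : I → ℝ} (hv : ∀ l, 0 < v l)
    (hg : ∀ l, MemLp (g l) 2 P) (hgv : ∀ l, ∫ ω, g l ω ^ 2 ∂P = v l) {H : I → I → ℝ}
    (hH : Summable fun p : I × I ↦ |H p.1 p.2| * √(v p.1) * √(v p.2)) :
    ∀ᵐ ω ∂P, Summable fun p : I × I ↦ H p.1 p.2 * g p.1 ω * g p.2 ω := by
  have hsummable := ae_summable_mul_of_summable_of_eLpNorm_le (P := P)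
    (a := fun p : I × I ↦ H p.1 p.2) (b := fun p ↦ √(v p.1) * √(v p.2))
    (X := fun p ↦ g p.1 * g p.2)
    (fun p ↦ mul_pos (Real.sqrt_pos.2 (hv p.1)) (Real.sqrt_pos.2 (hv p.2)))
    (fun p ↦ (hg p.1).1.mul (hg p.2).1)
    (fun p ↦ by simpa only [hgv] using eLpNorm_mul_le_mul_sqrt_integral_sq (hg p.1) (hg p.2))
    (by simpa only [mul_assoc] using hH)
  simpa only [Pi.mul_apply, mul_assoc] using hsummable

lemma variance_fun_sum_of_covariance_eq_zero [IsFiniteMeasure P] {ι : Type*} {s : Finset ι}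
    {X : ι → Ω → ℝ} (hX : ∀ i ∈ s, MemLp (X i) 2 P)
    (hcov : (s : Set ι).Pairwise fun i j ↦ cov[X i, X j; P] = 0) :
    Var[fun ω ↦ ∑ i ∈ s, X i ω; P] = ∑ i ∈ s, Var[X i; P] := by
  rw [variance_fun_sum' hX]
  refine Finset.sum_congr rfl fun i hi ↦ ?_
  rw [← covariance_self (hX i hi).aemeasurable]
  exact Finset.sum_eq_single_of_mem i hi fun j hj hji ↦ hcov hi hj hji.symm

lemma eLpNorm_average_sub_le [IsProbabilityMeasure P] {ι : Type*} {s : Finset ι} (hs : s.Nonempty)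
    {X : ι → Ω → ℝ} {m K : ℝ} (hX : ∀ i ∈ s, MemLp (X i) 2 P) (hmean : ∀ i ∈ s, P[X i] = m)
    (hvar : ∀ i ∈ s, Var[X i; P] ≤ K)
    (hcov : (s : Set ι).Pairwise fun i j ↦ cov[X i, X j; P] = 0) :
    eLpNorm (fun ω ↦ (s.card : ℝ)⁻¹ * ∑ i ∈ s, X i ω - m) 2 P ≤
      ENNReal.ofReal √(K / s.card) := by
  have hcard : (s.card : ℝ) ≠ 0 := Nat.cast_ne_zero.2 hs.card_ne_zero
  set A : Ω → ℝ := fun ω ↦ (s.card : ℝ)⁻¹ * ∑ i ∈ s, X i ω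
  have hA : MemLp A 2 P := (memLp_finsetSum s hX).const_mul _
  have hAmean : P[A] = m := by
    rw [integral_const_mul, integral_finsetSum s fun i hi ↦ (hX i hi).integrable one_le_two,
      Finset.sum_congr rfl hmean, Finset.sum_const, nsmul_eq_mul, inv_mul_cancel_left₀ hcard]
  have hAvar : Var[A; P] ≤ K / s.card :=
    calc Var[A; P] = (s.card : ℝ)⁻¹ ^ 2 * ∑ i ∈ s, Var[X i; P] := by
          rw [variance_const_mul, variance_fun_sum_of_covariance_eq_zero hX hcov]
      _ ≤ (s.card : ℝ)⁻¹ ^ 2 * (s.card • K) := by gcongr; exact s.sum_le_card_nsmul _ _ hvar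
      _ = K / s.card := by rw [nsmul_eq_mul]; field
  have hcentered : MemLp (fun ω ↦ A ω - m) 2 P := hA.sub (memLp_const m)
  rw [eLpNorm_two_eq_ofReal_sqrt_integral_sq hcentered, ← hAmean,
    ← variance_eq_integral hA.aemeasurable]
  gcongr

lemma memLp_sq_of_memLp_four {f : Ω → ℝ} (hf : MemLp f 4 P) : MemLp (fun ω ↦ f ω ^ 2) 2 P := by
  have : ENNReal.HolderTriple 4 4 2 := ⟨by
    rw [← two_mul, show (4 : ENNReal) = 2 * 2 by norm_num, ENNReal.mul_inv (by simp) (by simp),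
      ← mul_assoc, ENNReal.mul_inv_cancel two_ne_zero (by simp), one_mul]⟩
  simpa only [sq] using hf.mul' hf

lemma covariance_sq_eq_zero_of_indepFun [IsFiniteMeasure P] {X Y : Ω → ℝ} (hX : MemLp X 4 P)
    (hY : MemLp Y 4 P) (hXY : X ⟂ᵢ[P] Y) : cov[fun ω ↦ X ω ^ 2, fun ω ↦ Y ω ^ 2; P] = 0 :=
  (hXY.comp (φ := (· ^ 2)) (ψ := (· ^ 2)) (by fun_prop) (by fun_prop)).covariance_eq_zero
    (memLp_sq_of_memLp_four hX) (memLp_sq_of_memLp_four hY)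

lemma eLpNorm_average_normalized_sq_sub_one_le [IsProbabilityMeasure P] {ι : Type*} {s : Finset ι}
    (hs : s.Nonempty) {X : ι → Ω → ℝ} {v : ι → ℝ} {K : ℝ} (hv : ∀ i ∈ s, 0 < v i)
    (hX : ∀ i ∈ s, MemLp (X i) 4 P) (hXv : ∀ i ∈ s, ∫ ω, X i ω ^ 2 ∂P = v i)
    (hvar : ∀ i ∈ s, Var[fun ω ↦ X i ω ^ 2; P] ≤ K * v i ^ 2)
    (hcov : (s : Set ι).Pairwise fun i j ↦ cov[fun ω ↦ X i ω ^ 2, fun ω ↦ X j ω ^ 2; P] = 0) :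
    eLpNorm (fun ω ↦ (s.card : ℝ)⁻¹ * ∑ i ∈ s, X i ω ^ 2 / v i - 1) 2 P ≤
      ENNReal.ofReal √(K / s.card) := by
  simp only [div_eq_inv_mul _ (v _)]
  refine eLpNorm_average_sub_le hs (fun i hi ↦ (memLp_sq_of_memLp_four (hX i hi)).const_mul _)
    (fun i hi ↦ ?_) (fun i hi ↦ ?_) fun i hi j hj hij ↦ ?_
  · rw [integral_const_mul, hXv i hi, inv_mul_cancel₀ (hv i hi).ne']
  · rw [variance_const_mul, inv_pow, inv_mul_le_iff₀ (pow_pos (hv i hi) 2), mul_comm]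
    exact hvar i hi
  · beta_reduce
    rw [covariance_const_mul_left, covariance_const_mul_right, hcov hi hj hij, mul_zero, mul_zero]

end Probability

section Gaussian

variable {Ω : Type*} [MeasurableSpace Ω] {P : Measure Ω} {X : Ω → ℝ} {v : NNReal}

lemma memLp_of_hasLaw_gaussianReal {m : ℝ} (hX : HasLaw X (gaussianReal m v) P) {p : ENNReal}
    (hp : p ≠ ⊤) : MemLp X p P :=
  (hX.map_eq ▸ memLp_id_gaussianReal' p hp).comp_of_map hX.aemeasurable

lemma integral_sq_of_hasLaw_gaussianReal (hX : HasLaw X (gaussianReal 0 v) P) :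
    ∫ ω, X ω ^ 2 ∂P = v := by
  have hmean : P[X] = 0 := hX.integral_eq.trans integral_id_gaussianReal
  rw [← variance_of_integral_eq_zero hX.aemeasurable hmean, hX.variance_eq,
    variance_id_gaussianReal]

lemma variance_sq_of_hasLaw_gaussianReal (hX : HasLaw X (gaussianReal 0 v) P) :
    Var[fun ω ↦ X ω ^ 2; P] = Var[fun x ↦ x ^ 2; gaussianReal 0 1] * v ^ 2 := by
  have hscale : (gaussianReal 0 1).map (√v * ·) = gaussianReal 0 v := by
    rw [gaussianReal_map_const_mul]
    congr 1
    · simp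
    · ext; simp
  calc Var[fun ω ↦ X ω ^ 2; P]
      = Var[fun x ↦ x ^ 2; P.map X] :=
        (variance_map (X := fun x : ℝ ↦ x ^ 2) (by fun_prop) hX.aemeasurable).symm
    _ = Var[fun x ↦ (√v * x) ^ 2; gaussianReal 0 1] := by
        rw [hX.map_eq, ← hscale]
        exact variance_map (X := fun x : ℝ ↦ x ^ 2) (by fun_prop) (by fun_prop)
    _ = Var[fun x ↦ x ^ 2; gaussianReal 0 1] * v ^ 2 := by
        simp only [mul_pow, Real.sq_sqrt v.coe_nonneg]
        rw [variance_const_mul, mul_comm]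

end Gaussian

section RenormalizedLimit

variable {I : Type*} [DecidableEq I] {v : I → ℝ} {d : ℕ → I} {H : I → I → ℝ} {S : ℝ} {n : ℕ}

lemma tsum_sub_diagonalCorrection_trace (hd : Function.Injective d) (hv : ∀ l, v l ≠ 0)
    (hn : n ≠ 0) (hH : HasSum (fun l ↦ H l l * v l) S) :
    ∑' l, (H l l - diagonalCorrection v d S n l l) * v l = 0 := by
  have hsum := hH.sub (hasSum_diagonalCorrection_trace (S := S) hd hv hn)
  simpa only [sub_mul, sub_self] using hsum.tsum_eq

lemma tsum_sub_diagonalCorrection_quadratic (hd : Function.Injective d) {x : I → ℝ}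
    (hx : Summable fun p : I × I ↦ H p.1 p.2 * x p.1 * x p.2) :
    ∑' p : I × I, (H p.1 p.2 - diagonalCorrection v d S n p.1 p.2) * x p.1 * x p.2 =
      ∑' p : I × I, H p.1 p.2 * x p.1 * x p.2 -
        S * ((n : ℝ)⁻¹ * ∑ k ∈ Finset.Icc 1 n, x (d k) ^ 2 / v (d k)) := by
  simpa only [sub_mul] using (hx.hasSum.sub (hasSum_diagonalCorrection_quadratic hd x)).tsum_eq

lemma eLpNorm_renormalized_quadratic_sub_le {Ω : Type*} [MeasurableSpace Ω] {P : Measure Ω}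
    [IsProbabilityMeasure P] {g : I → Ω → ℝ} {K : ℝ} (hv : ∀ l, 0 < v l)
    (hg : ∀ l, MemLp (g l) 4 P) (hgv : ∀ l, ∫ ω, g l ω ^ 2 ∂P = v l)
    (hvar : ∀ l, Var[fun ω ↦ g l ω ^ 2; P] ≤ K * v l ^ 2)
    (hcov : Pairwise fun l l' ↦ cov[fun ω ↦ g l ω ^ 2, fun ω ↦ g l' ω ^ 2; P] = 0)
    (hd : Function.Injective d)
    (hH : Summable fun p : I × I ↦ |H p.1 p.2| * √(v p.1) * √(v p.2)) (hn : n ≠ 0) :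
    eLpNorm (fun ω ↦
        (∑' p : I × I, (H p.1 p.2 - diagonalCorrection v d S n p.1 p.2) * g p.1 ω * g p.2 ω)
          - ((∑' p : I × I, H p.1 p.2 * g p.1 ω * g p.2 ω) - S)) 2 P ≤
      ‖S‖ₑ * ENNReal.ofReal √(K / n) := by
  have htwo : ∀ l, MemLp (g l) 2 P := fun l ↦ (hg l).mono_exponent (by norm_num)
  set average : Ω → ℝ := fun ω ↦ (n : ℝ)⁻¹ * ∑ k ∈ Finset.Icc 1 n, g (d k) ω ^ 2 / v (d k)
  have hae : (fun ω ↦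
      (∑' p : I × I, (H p.1 p.2 - diagonalCorrection v d S n p.1 p.2) * g p.1 ω * g p.2 ω)
        - ((∑' p : I × I, H p.1 p.2 * g p.1 ω * g p.2 ω) - S)) =ᵐ[P]
      (-S) • fun ω ↦ average ω - 1 := by
    filter_upwards [ae_summable_quadratic hv htwo hgv hH] with ω hω
    rw [tsum_sub_diagonalCorrection_quadratic (x := (g · ω)) hd hω, Pi.smul_apply, smul_eq_mul]
    ring
  rw [eLpNorm_congr_ae hae, eLpNorm_const_smul, enorm_neg]
  gcongr
  simpa only [Nat.card_Icc, Nat.add_sub_cancel] using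
    eLpNorm_average_normalized_sq_sub_one_le (X := fun k ↦ g (d k)) (v := fun k ↦ v (d k))
      (Finset.nonempty_Icc.2 (Nat.one_le_iff_ne_zero.2 hn)) (fun k _ ↦ hv (d k))
      (fun k _ ↦ hg (d k)) (fun k _ ↦ hgv (d k)) (fun k _ ↦ hvar (d k))
      fun k _ k' _ hkk' ↦ hcov (hd.ne hkk')

end RenormalizedLimit

lemma tendsto_const_mul_ofReal_sqrt_div_nat {C : ENNReal} (hC : C ≠ ⊤) (K : ℝ) :
    Tendsto (fun n : ℕ ↦ C * ENNReal.ofReal √(K / n)) atTop (nhds 0) := by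
  have hsqrt : Tendsto (fun n : ℕ ↦ √(K / n)) atTop (nhds 0) := by
    simpa only [Real.sqrt_zero] using (tendsto_const_div_atTop_nhds_zero_nat K).sqrt
  simpa only [ENNReal.ofReal_zero, mul_zero] using
    ENNReal.Tendsto.const_mul (ENNReal.tendsto_ofReal hsqrt) (.inr hC)

theorem renormalized_limit_identity_general
    {I : Type*} [DecidableEq I] {Ω : Type*} [MeasurableSpace Ω]
    (P : Measure Ω) [IsProbabilityMeasure P]
    (g : I → Ω → ℝ) (v : I → ℝ) (K : ℝ)
    (hv : ∀ l, 0 < v l)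
    (hg : ∀ l, MemLp (g l) 4 P)
    (hgv : ∀ l, ∫ ω, g l ω ^ 2 ∂P = v l)
    (hvar : ∀ l, Var[fun ω ↦ g l ω ^ 2; P] ≤ K * v l ^ 2)
    (hcov : Pairwise fun l l' ↦ cov[fun ω ↦ g l ω ^ 2, fun ω ↦ g l' ω ^ 2; P] = 0)
    (d : ℕ → I) (hd : Function.Injective d)
    (H : I → I → ℝ) (hH : Summable fun p : I × I ↦ |H p.1 p.2| * √(v p.1) * √(v p.2))
    (S : ℝ) (hS : S = ∑' l, H l l * v l)
    (Hn : ℕ → I → I → ℝ)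
    (hHn : ∀ n l l', Hn n l l' = H l l' - diagonalCorrection v d S n l l') :
    (∀ n : ℕ, 1 ≤ n → ∑' l, Hn n l l * v l = 0) ∧
    (∀ n : ℕ, 1 ≤ n →
      ∑' p : I × I, (Hn n p.1 p.2 - H p.1 p.2) ^ 2 * v p.1 * v p.2 = S ^ 2 / n) ∧
    Tendsto (fun n ↦ ∑' p : I × I, (Hn n p.1 p.2 - H p.1 p.2) ^ 2 * v p.1 * v p.2)
      atTop (nhds 0) ∧
    Tendsto (fun n ↦ eLpNorm
        (fun ω ↦ (∑' p : I × I, Hn n p.1 p.2 * g p.1 ω * g p.2 ω)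
          - ((∑' p : I × I, H p.1 p.2 * g p.1 ω * g p.2 ω) - S)) 2 P)
      atTop (nhds 0) := by
  have hv₀ : ∀ l, v l ≠ 0 := fun l ↦ (hv l).ne'
  have htrace : HasSum (fun l ↦ H l l * v l) S :=
    hS ▸ (summable_diagonal_of_summable_sqrt (fun l ↦ (hv l).le) hH).hasSum
  have hsq : ∀ n : ℕ, 1 ≤ n →
      ∑' p : I × I, (Hn n p.1 p.2 - H p.1 p.2) ^ 2 * v p.1 * v p.2 = S ^ 2 / n := fun n hn ↦ by
    simpa only [hHn, sub_sub_cancel_left, neg_sq] using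
      (hasSum_diagonalCorrection_sq hd hv₀ (Nat.one_le_iff_ne_zero.1 hn)).tsum_eq
  refine ⟨fun n hn ↦ ?_, hsq, ?_, ?_⟩
  · simpa only [hHn] using
      tsum_sub_diagonalCorrection_trace hd hv₀ (Nat.one_le_iff_ne_zero.1 hn) htrace
  · refine (tendsto_const_div_atTop_nhds_zero_nat (S ^ 2)).congr' ?_
    filter_upwards [eventually_ge_atTop 1] with n hn using (hsq n hn).symm
  · refine tendsto_of_tendsto_of_tendsto_of_le_of_le' tendsto_const_nhds
      (tendsto_const_mul_ofReal_sqrt_div_nat (enorm_ne_top (x := S)) K)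
      (.of_forall fun _ ↦ zero_le) ?_
    filter_upwards [eventually_ne_atTop 0] with n hn
    simpa only [hHn] using eLpNorm_renormalized_quadratic_sub_le hv hg hgv hvar hcov hd hH hn

/-- **Renormalized limit identity (relation between `⋄` and `⊗`).** Let `(g_l)_{l∈I}` be a
countable family of independent centered real Gaussian random variables with variances
`σ_l² = v l ∈ (0,∞)`, `(d_n)_{n≥1}` an injective sequence in `I`, and `H` symmetric with
`∑_{l,l'} |H_{l,l'}| σ_l σ_{l'} < ∞`, `S = ∑_l H_{l,l} σ_l²`. With
`Hⁿ_{l,l'} = H_{l,l'} − S/(n σ_{d_k}²)` if `l = l' = d_k` for some `1 ≤ k ≤ n` and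
`Hⁿ_{l,l'} = H_{l,l'}` otherwise, one has (a) `∑_l Hⁿ_{l,l} σ_l² = 0`;
(b) `∑_{l,l'} (Hⁿ_{l,l'} − H_{l,l'})² σ_l² σ_{l'}² = S²/n → 0`; and
(c) `Xₙ = ∑_{l,l'} Hⁿ_{l,l'} g_l g_{l'} → ∑_{l,l'} H_{l,l'} g_l g_{l'} − S` in `L²(P)`. -/
theorem renormalized_limit_identity
    {I : Type*} [Countable I] [DecidableEq I] {Ω : Type*} [MeasurableSpace Ω]
    (P : Measure Ω) [IsProbabilityMeasure P]
    (g : I → Ω → ℝ) (v : I → NNReal)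
    (hmeas : ∀ l, Measurable (g l))
    (hv : ∀ l, 0 < v l)
    (hlaw : ∀ l, P.map (g l) = gaussianReal 0 (v l))
    (hindep : iIndepFun g P)
    (d : ℕ → I) (hd : Function.Injective d)
    (H : I → I → ℝ) (hsymm : ∀ l l', H l l' = H l' l)
    (habs : Summable fun p : I × I => |H p.1 p.2| * Real.sqrt (v p.1) * Real.sqrt (v p.2))
    (S : ℝ) (hS : S = ∑' l, H l l * (v l : ℝ))
    (Hn : ℕ → I → I → ℝ)
    (hHn : ∀ n l l', Hn n l l' =
      H l l' - if l = l' ∧ ∃ k ∈ Finset.Icc 1 n, d k = l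
        then S / ((n : ℝ) * (v l : ℝ)) else 0) :
    (∀ n : ℕ, 1 ≤ n → ∑' l, Hn n l l * (v l : ℝ) = 0) ∧
    (∀ n : ℕ, 1 ≤ n →
      ∑' p : I × I, (Hn n p.1 p.2 - H p.1 p.2)^2 * (v p.1 : ℝ) * (v p.2 : ℝ) = S^2 / n) ∧
    Tendsto
      (fun n => ∑' p : I × I, (Hn n p.1 p.2 - H p.1 p.2)^2 * (v p.1 : ℝ) * (v p.2 : ℝ))
      atTop (nhds 0) ∧
    Tendsto (fun n => eLpNorm
        (fun ω => (∑' p : I × I, Hn n p.1 p.2 * g p.1 ω * g p.2 ω)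
          - ((∑' p : I × I, H p.1 p.2 * g p.1 ω * g p.2 ω) - S)) 2 P)
      atTop (nhds 0) := by
  have hgauss : ∀ l, HasLaw (g l) (gaussianReal 0 (v l)) P :=
    fun l ↦ ⟨(hmeas l).aemeasurable, hlaw l⟩
  have hg : ∀ l, MemLp (g l) 4 P :=
    fun l ↦ memLp_of_hasLaw_gaussianReal (hgauss l) ENNReal.ofNat_ne_top
  exact renormalized_limit_identity_general P g (fun l ↦ v l) _ hv hg
    (fun l ↦ integral_sq_of_hasLaw_gaussianReal (hgauss l))
    (fun l ↦ (variance_sq_of_hasLaw_gaussianReal (hgauss l)).le)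
    (fun l l' hll' ↦ covariance_sq_eq_zero_of_indepFun (hg l) (hg l') (hindep.indepFun hll'))
    d hd H habs S hS Hn hHn
end
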